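/- Let F be an infinite field, let u > r ≥ 2 be integers, and let 1 ≤ k ≤ r−1 and 1 ≤ l ≤ u−r. Let P be a partition whose Burge code is α^{u−r−l} β^{l} α^{r−k} β^{k} α. Then the Zariski closure in F^N of the set W^Q_{k,l} = { x ∈ F^N : the Jordan type of M_x equals P } is exactly the zero locus X^Q_{k,l} of the set of polynomials E^Q_{k,l}. -/

import Mathlib

open Polynomial

noncomputable section

/-- The quotient module `F[t]/(t^m)`. -/
abbrev PQ (F : Type*) [Field F] (m : ℕ) : Type _ := F[X] ⧸ Ideal.span {(X : F[X]) ^ m}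

variable (F : Type*) [Field F]

lemma mulQ_cond (m m' : ℕ) (c : F[X]) (h : (X : F[X]) ^ m' ∣ c * X ^ m) :
    Ideal.span {(X : F[X]) ^ m} ≤
      Submodule.comap (LinearMap.mulLeft F[X] c) (Ideal.span {(X : F[X]) ^ m'}) := by
  rw [Ideal.span_le]
  intro x hx
  rw [Set.mem_singleton_iff] at hx
  subst hx
  simp only [SetLike.mem_coe, Submodule.mem_comap, LinearMap.mulLeft_apply]
  exact Ideal.mem_span_singleton.mpr h

/-- The `F`-linear map `F[t]/(t^m) → F[t]/(t^{m'})` induced by multiplication by the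
polynomial `c`, well-defined whenever `t^{m'} ∣ c · t^m`. -/
def mulQ (m m' : ℕ) (c : F[X]) (h : (X : F[X]) ^ m' ∣ c * X ^ m) :
    PQ F m →ₗ[F] PQ F m' :=
  LinearMap.restrictScalars F
    (Submodule.mapQ (Ideal.span {(X : F[X]) ^ m}) (Ideal.span {(X : F[X]) ^ m'})
      (LinearMap.mulLeft F[X] c) (mulQ_cond F m m' c h))

lemma dvd_A (u : ℕ) (c : F[X]) : (X : F[X]) ^ u ∣ c * X ^ u := Dvd.intro c (mul_comm _ _)

lemma dvd_G (u r : ℕ) (hru : r ≤ u) (g : F[X]) :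
    (X : F[X]) ^ u ∣ (X ^ r * g) * X ^ (u - r) := by
  refine Dvd.intro g ?_
  rw [mul_comm ((X:F[X])^r) g, mul_assoc, ← pow_add, Nat.add_sub_cancel' hru, mul_comm]

lemma dvd_H (u r : ℕ) (h : F[X]) : (X : F[X]) ^ (u - r) ∣ h * X ^ u :=
  Dvd.dvd.mul_left (pow_dvd_pow _ (Nat.sub_le u r)) h

/-- The `F[t]`-module endomorphism of `V = F[t]/(t^u) ⊕ t^r·F[t]/(t^u)` given by
`M(v₁, v₂) = (a v₁ + g v₂, h t^r v₁ + b v₂)`, where the second summand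
`t^r·F[t]/(t^u)` is identified with `F[t]/(t^{u-r})` via `w ↦ t^r w`
(so the lower-left entry becomes `v₁ ↦ h v₁ mod t^{u-r}` and the upper-right
entry becomes `w ↦ t^r g w mod t^u`). -/
def Mmap (u r : ℕ) (hru : r ≤ u) (a g h b : F[X]) :
    (PQ F u × PQ F (u - r)) →ₗ[F] (PQ F u × PQ F (u - r)) :=
  LinearMap.prod
    ((mulQ F u u a (dvd_A F u a)).comp (LinearMap.fst F (PQ F u) (PQ F (u - r))) +
      (mulQ F (u - r) u (X ^ r * g) (dvd_G F u r hru g)).comp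
        (LinearMap.snd F (PQ F u) (PQ F (u - r))))
    ((mulQ F u (u - r) h (dvd_H F u r h)).comp (LinearMap.fst F (PQ F u) (PQ F (u - r))) +
      (mulQ F (u - r) (u - r) b (dvd_A F (u - r) b)).comp
        (LinearMap.snd F (PQ F u) (PQ F (u - r))))

/-- `B` has Jordan type `P` (a partition given as the multiset of its parts):
the corank of every power of `B` is the one prescribed by `P`, i.e.
`dim ker (B^s) = Σ_i min(pᵢ, s)` for all `s ≥ 0`. -/
def JordanTypeIs {V : Type*} [AddCommGroup V] [Module F V] (B : Module.End F V)
    (P : Multiset ℕ) : Prop :=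
  ∀ s : ℕ, Module.finrank F (LinearMap.ker (B ^ s)) = (P.map fun p => min p s).sum

/-- Index type for the `N = 4u-3r-2` coordinates
`(a_1,…,a_{u−1}, b_1,…,b_{u−r−1}, g_0,…,g_{u−r−1}, h_0,…,h_{u−r−1})`. -/
abbrev Vars (u r : ℕ) : Type := Fin (u - 1) ⊕ Fin (u - r - 1) ⊕ Fin (u - r) ⊕ Fin (u - r)

/-- `a = Σ_{i=1}^{u−1} a_i t^i`. -/
def paOf (u r : ℕ) (x : Vars u r → F) : F[X] :=
  ∑ i : Fin (u - 1), C (x (Sum.inl i)) * X ^ ((i : ℕ) + 1)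

/-- `b = Σ_{i=1}^{u−r−1} b_i t^i`. -/
def pbOf (u r : ℕ) (x : Vars u r → F) : F[X] :=
  ∑ i : Fin (u - r - 1), C (x (Sum.inr (Sum.inl i))) * X ^ ((i : ℕ) + 1)

/-- `g = Σ_{i=0}^{u−r−1} g_i t^i`. -/
def pgOf (u r : ℕ) (x : Vars u r → F) : F[X] :=
  ∑ i : Fin (u - r), C (x (Sum.inr (Sum.inr (Sum.inl i)))) * X ^ (i : ℕ)

/-- `h = Σ_{i=0}^{u−r−1} h_i t^i`. -/
def phOf (u r : ℕ) (x : Vars u r → F) : F[X] :=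
  ∑ i : Fin (u - r), C (x (Sum.inr (Sum.inr (Sum.inr i)))) * X ^ (i : ℕ)

/-- The nilpotent endomorphism `M_x` of `V` determined by the point `x ∈ F^N`. -/
def Mx (u r : ℕ) (hru : r ≤ u) (x : Vars u r → F) :
    Module.End F (PQ F u × PQ F (u - r)) :=
  Mmap F u r hru (paOf F u r x) (pgOf F u r x) (phOf F u r x) (pbOf F u r x)

/-- The variable `a_i` as a polynomial function on `F^N` (meaningful for `1 ≤ i ≤ u-1`). -/
def Av (u r : ℕ) (i : ℕ) : MvPolynomial (Vars u r) F :=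
  if h : i - 1 < u - 1 then MvPolynomial.X (Sum.inl ⟨i - 1, h⟩) else 0

/-- The variable `b_i` as a polynomial function on `F^N` (meaningful for `1 ≤ i ≤ u-r-1`). -/
def Bv (u r : ℕ) (i : ℕ) : MvPolynomial (Vars u r) F :=
  if h : i - 1 < u - r - 1 then MvPolynomial.X (Sum.inr (Sum.inl ⟨i - 1, h⟩)) else 0

/-- The variable `g_i` as a polynomial function on `F^N` (meaningful for `0 ≤ i ≤ u-r-1`). -/
def Gv (u r : ℕ) (i : ℕ) : MvPolynomial (Vars u r) F :=
  if h : i < u - r then MvPolynomial.X (Sum.inr (Sum.inr (Sum.inl ⟨i, h⟩))) else 0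

/-- The variable `h_i` as a polynomial function on `F^N` (meaningful for `0 ≤ i ≤ u-r-1`). -/
def Hv (u r : ℕ) (i : ℕ) : MvPolynomial (Vars u r) F :=
  if h : i < u - r then MvPolynomial.X (Sum.inr (Sum.inr (Sum.inr ⟨i, h⟩))) else 0

/-- The set of polynomials `E^Q_{k,l}` for `Q = (u, u-r)`:
`{a_1,…,a_{k−1}, b_1,…,b_{l−1}}` if `k+l ≤ r`, and
`{a_1,…,a_{k−1}, b_1,…,b_{r−k−1}}` together with the quadratic polynomials
`Σ_{j=0}^{m} a_{k+j} b_{r−k+m−j} − Σ_{j=0}^{m} g_j h_{m−j}` for `0 ≤ m ≤ k+l−r−1`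
if `k+l ≥ r+1`. -/
def Eset (u r k l : ℕ) : Set (MvPolynomial (Vars u r) F) :=
  if k + l ≤ r then
    {p | ∃ i, 1 ≤ i ∧ i ≤ k - 1 ∧ p = Av F u r i} ∪
      {p | ∃ i, 1 ≤ i ∧ i ≤ l - 1 ∧ p = Bv F u r i}
  else
    {p | ∃ i, 1 ≤ i ∧ i ≤ k - 1 ∧ p = Av F u r i} ∪
      {p | ∃ i, 1 ≤ i ∧ i ≤ r - k - 1 ∧ p = Bv F u r i} ∪
      {p | ∃ m, m ≤ k + l - r - 1 ∧ p =
        (∑ j ∈ Finset.range (m + 1), Av F u r (k + j) * Bv F u r (r - k + m - j)) -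
          (∑ j ∈ Finset.range (m + 1), Gv F u r j * Hv F u r (m - j))}

/-- The common zero locus in `F^N` of a set `T` of polynomials. -/
def zLocus (u r : ℕ) (T : Set (MvPolynomial (Vars u r) F)) : Set (Vars u r → F) :=
  {x | ∀ p ∈ T, MvPolynomial.eval x p = 0}

/-- `X^Q_{k,l}`, the common zero locus of `E^Q_{k,l}`. -/
def Xlocus (u r k l : ℕ) : Set (Vars u r → F) := zLocus F u r (Eset F u r k l)

/-- Zariski-closed subsets of `F^N`: common zero loci of sets of polynomials. -/
def IsZClosed (u r : ℕ) (S : Set (Vars u r → F)) : Prop :=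
  ∃ T : Set (MvPolynomial (Vars u r) F), S = zLocus F u r T

/-- The Zariski closure of a subset of `F^N`. -/
def zClosure (u r : ℕ) (S : Set (Vars u r → F)) : Set (Vars u r → F) :=
  ⋂₀ {C | IsZClosed F u r C ∧ S ⊆ C}

end

section Burge

/-- Scanning the frequency sequence `f` downward from `j`, forming backward pairs:
whenever `f j > 0` (and `j` has not been consumed by a previously formed pair),
put `j` in the set and consume the index `j - 1`. -/
def RsetGo (f : ℕ → ℕ) : ℕ → Finset ℕ
  | 0 => ∅
  | 1 => if 0 < f 1 then {1} else ∅
  | (j + 2) => if 0 < f (j + 2) then insert (j + 2) (RsetGo f j) else RsetGo f (j + 1)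

/-- The set `R(P)` of a partition `P` (given as the multiset of its parts, with
frequency sequence `j ↦ P.count j`); the scan starts at the largest part `P.sup`. -/
def Rset (P : Multiset ℕ) : Finset ℕ := RsetGo (fun j => P.count j) P.sup

/-- The partition `∂P`: for each `j ∈ R(P)` one copy of the part `j` is replaced by
`j - 1` (discarded when `j - 1 = 0`). -/
def dP (P : Multiset ℕ) : Multiset ℕ :=
  (P - (Rset P).val) + (((Rset P).val.map fun j => j - 1).filter fun j => 0 < j)

/-- Fuel-driven computation of the Burge code; `false` stands for `α`, `true` for `β`.
(The fuel `P.sum + 1` used in `burgeCode` always suffices, since `∂` strictly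
decreases the size of a nonempty partition.) -/
def burgeGo : ℕ → Multiset ℕ → List Bool
  | 0, _ => []
  | (n + 1), P =>
    if P = 0 then [false]
    else (if 1 ∈ Rset P then true else false) :: burgeGo n (dP P)

/-- The Burge code of the partition `P`: the word `w_1 ⋯ w_m` with `w_i = β` (`true`)
if `∂^{i-1} P` is in class `B` (i.e. `1 ∈ R(∂^{i-1}P)`) and `w_i = α` (`false`)
otherwise, where `m = min { i : ∂^{i-1} P = (0) }`. -/
def burgeCode (P : Multiset ℕ) : List Bool := burgeGo (P.sum + 1) P

/-- The almost rectangular partition `[m]^k` of `m` into `k` parts, each equal to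
`⌈m/k⌉` or `⌊m/k⌋`. -/
def arPart (m k : ℕ) : Multiset ℕ :=
  Multiset.replicate (m % k) (m / k + 1) + Multiset.replicate (k - m % k) (m / k)

/-- Greedy decomposition of a weakly decreasing list of parts into maximal
almost rectangular segments from the top (fuel-driven helper). -/
def greedyGo : ℕ → List ℕ → List (List ℕ)
  | 0, _ => []
  | _ + 1, [] => []
  | n + 1, p :: rest =>
    ((p :: rest).takeWhile fun q => decide (p ≤ q + 1)) ::
      greedyGo n ((p :: rest).dropWhile fun q => decide (p ≤ q + 1))

/-- The greedy decomposition of a weakly decreasing list of parts into maximal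
almost rectangular subpartitions from the top. -/
def greedy (l : List ℕ) : List (List ℕ) := greedyGo l.length l

end Burge


/-! ### Burge code combinatorics -/

/-- kernel-dimension function of a partition -/
def kf (P : Multiset ℕ) (s : ℕ) : ℕ := (P.map fun p => min p s).sum

lemma RsetGo_le (f : ℕ → ℕ) : ∀ n j, j ∈ RsetGo f n → 1 ≤ j ∧ j ≤ n := by
  intro n
  induction n using Nat.strong_induction_on with
  | _ n ih =>
    intro j hj
    match n, ih, hj with
    | 0, ih, hj => simp [RsetGo] at hj
    | 1, ih, hj =>
      simp only [RsetGo] at hj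
      split_ifs at hj <;> simp_all
    | n + 2, ih, hj =>
      simp only [RsetGo] at hj
      split_ifs at hj with h
      · rw [Finset.mem_insert] at hj
        rcases hj with rfl | hj
        · omega
        · have := ih n (by omega) j hj; omega
      · have := ih (n + 1) (by omega) j hj; omega

lemma RsetGo_iff (f : ℕ → ℕ) : ∀ n j, 1 ≤ j → j ≤ n →
    (j ∈ RsetGo f n ↔ 0 < f j ∧ j + 1 ∉ RsetGo f n) := by
  intro n
  induction n using Nat.strong_induction_on with
  | _ n ih =>
    intro j h1 hj
    match n, ih, hj with
    | 0, ih, hj => omega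
    | 1, ih, hj =>
      have : j = 1 := by omega
      subst this
      simp only [RsetGo]
      split_ifs <;> simp_all
    | n + 2, ih, hj =>
      simp only [RsetGo]
      split_ifs with h
      · rw [Finset.mem_insert, Finset.mem_insert]
        rcases Nat.lt_or_ge n j with h2 | h2
        · have a1 : j ∉ RsetGo f n := fun hh => by have := RsetGo_le f n j hh; omega
          have a2 : j + 1 ∉ RsetGo f n := fun hh => by have := RsetGo_le f n _ hh; omega
          rcases (show j = n + 1 ∨ j = n + 2 by omega) with rfl | rfl
          · simp [a1, a2]
          · simp [a2, h]
        · have a := ih n (by omega) j h1 h2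
          have b1 : j ≠ n + 2 := by omega
          have b2 : j + 1 ≠ n + 2 := by omega
          simp only [b1, b2, false_or]
          exact a
      · rcases Nat.lt_or_ge (n + 1) j with h2 | h2
        · have : j = n + 2 := by omega
          subst this
          have a1 : n + 2 ∉ RsetGo f (n + 1) := fun hh => by
            have := RsetGo_le f _ _ hh; omega
          simp [a1, h]
        · exact ih (n + 1) (by omega) j h1 h2

lemma Rset_pos (P : Multiset ℕ) (j : ℕ) (h : j ∈ Rset P) : 1 ≤ j := (RsetGo_le _ _ _ h).1

lemma Rset_iff (P : Multiset ℕ) (j : ℕ) (h1 : 1 ≤ j) :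
    (j ∈ Rset P ↔ 0 < P.count j ∧ j + 1 ∉ Rset P) := by
  rcases Nat.lt_or_ge P.sup j with h | h
  · have a : j ∉ Rset P := fun hh => by have := RsetGo_le _ _ _ hh; omega
    have b : P.count j = 0 := by
      rw [Multiset.count_eq_zero]
      intro hh
      have := Multiset.le_sup hh
      omega
    simp [a, b]
  · exact RsetGo_iff _ _ j h1 h

lemma Rset_val_le (P : Multiset ℕ) : (Rset P).val ≤ P := by
  rw [Multiset.le_iff_count]
  intro j
  by_cases h : j ∈ Rset P
  · have h1 := ((Rset_iff P j (Rset_pos P j h)).1 h).1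
    have := Multiset.nodup_iff_count_le_one.1 (Rset P).nodup j
    omega
  · rw [Multiset.count_eq_zero_of_notMem (by simpa using h)]
    omega

/-- number of elements of `R(P)` that are at most `s` -/
def rho (P : Multiset ℕ) (s : ℕ) : ℕ := ((Rset P).filter fun j => j ≤ s).card

lemma kf_add (P Q : Multiset ℕ) (s : ℕ) : kf (P + Q) s = kf P s + kf Q s := by
  simp [kf]

lemma kf_cons (a : ℕ) (P : Multiset ℕ) (s : ℕ) : kf (a ::ₘ P) s = min a s + kf P s := by
  simp [kf]

lemma kf_filter (P : Multiset ℕ) (s : ℕ) : kf (P.filter fun j => 0 < j) s = kf P s := by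
  induction P using Multiset.induction_on with
  | empty => rfl
  | cons a P ih =>
    by_cases h : 0 < a
    · rw [Multiset.filter_cons_of_pos _ h, kf_cons, kf_cons, ih]
    · rw [Multiset.filter_cons_of_neg _ h, kf_cons, ih]
      omega

lemma kf_R (R : Finset ℕ) (hR : ∀ j ∈ R, 1 ≤ j) (s : ℕ) :
    kf R.val s = kf (R.val.map fun j => j - 1) s + (R.filter fun j => j ≤ s).card := by
  induction R using Finset.induction_on with
  | empty => rfl
  | insert a R ha ih =>
    have ih := ih (fun j hj => hR j (Finset.mem_insert_of_mem hj))
    have h1 := hR a (Finset.mem_insert_self _ _)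
    rw [Finset.insert_val_of_notMem ha, Finset.filter_insert]
    simp only [kf, Multiset.map_cons, Multiset.sum_cons] at *
    split_ifs with h
    · rw [Finset.card_insert_of_notMem (by simp [ha])]
      omega
    · omega

lemma kf_dP (P : Multiset ℕ) (s : ℕ) : kf P s = kf (dP P) s + rho P s := by
  have h := kf_add (P - (Rset P).val) (Rset P).val s
  rw [Multiset.sub_add_cancel (Rset_val_le P)] at h
  rw [h, dP, kf_add, kf_filter, kf_R _ (Rset_pos P), rho]
  omega

lemma kf_zero (P : Multiset ℕ) : kf P 0 = 0 := by
  induction P using Multiset.induction_on with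
  | empty => rfl
  | cons a P ih =>
    simp only [kf, Multiset.map_cons, Multiset.sum_cons] at *
    omega

lemma kf_count (P : Multiset ℕ) (s : ℕ) :
    2 * kf P (s + 1) = kf P s + kf P (s + 2) + P.count (s + 1) := by
  induction P using Multiset.induction_on with
  | empty => rfl
  | cons a P ih =>
    rw [Multiset.count_cons]
    simp only [kf, Multiset.map_cons, Multiset.sum_cons] at *
    split_ifs <;> omega

lemma rho_zero (P : Multiset ℕ) : rho P 0 = 0 := by
  rw [rho, Finset.card_eq_zero, Finset.filter_eq_empty_iff]
  intro j hj
  have := Rset_pos P j hj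
  omega

lemma rho_succ (P : Multiset ℕ) (s : ℕ) :
    rho P (s + 1) = rho P s + if s + 1 ∈ Rset P then 1 else 0 := by
  split_ifs with h
  · have : (Rset P).filter (fun j => j ≤ s + 1) =
        insert (s + 1) ((Rset P).filter fun j => j ≤ s) := by
      ext j
      simp only [Finset.mem_filter, Finset.mem_insert]
      constructor
      · rintro ⟨a, b⟩
        by_cases hh : j = s + 1
        · exact Or.inl hh
        · exact Or.inr ⟨a, by omega⟩
      · rintro (rfl | ⟨a, b⟩)
        · exact ⟨h, le_rfl⟩
        · exact ⟨a, by omega⟩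
    rw [rho, this, Finset.card_insert_of_notMem (by simp)]
    rfl
  · have : (Rset P).filter (fun j => j ≤ s + 1) = ((Rset P).filter fun j => j ≤ s) := by
      ext j
      simp only [Finset.mem_filter]
      constructor
      · rintro ⟨a, b⟩
        refine ⟨a, ?_⟩
        have : j ≠ s + 1 := by rintro rfl; exact h a
        omega
      · rintro ⟨a, b⟩
        exact ⟨a, by omega⟩
    rw [rho, this]
    rfl

lemma rho_rec (P : Multiset ℕ) (s : ℕ) :
    rho P (s + 2) = rho P (s + 1) +
      if (kf (dP P) s + kf (dP P) (s + 2) < 2 * kf (dP P) (s + 1) ∧ rho P (s + 1) = rho P s)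
        then 1 else 0 := by
  have e0 := kf_dP P s
  have e1 := kf_dP P (s + 1)
  have e2 := kf_dP P (s + 2)
  have c := kf_count P s
  have r1 := rho_succ P s
  have r2 : rho P (s + 2) = rho P (s + 1) + if s + 2 ∈ Rset P then 1 else 0 :=
    rho_succ P (s + 1)
  have i1 := Rset_iff P (s + 1) (by omega)
  by_cases h1 : s + 1 ∈ Rset P <;> by_cases h2 : s + 2 ∈ Rset P
  · simp [h1, h2] at i1
  · simp only [h1, h2, if_true, if_false] at r1 r2
    rw [if_neg (by omega)]; omega
  · simp only [h1, h2, if_true, if_false] at r1 r2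
    rw [if_pos (by omega)]; omega
  · simp only [h1, h2, if_false] at r1 r2
    have : P.count (s + 1) = 0 := by
      simp only [h1, h2, not_false_iff, and_true, false_iff] at i1; omega
    rw [if_neg (by omega)]; omega

/-- one step of the Burge correspondence read backwards on the level of kernel functions -/
lemma kf_step (P : Multiset ℕ) (c : Bool) (hc : (if 1 ∈ Rset P then true else false) = c)
    (f f' : ℕ → ℤ) (hf' : ∀ s, (kf (dP P) s : ℤ) = f' s)
    (h0 : f 0 = f' 0) (h1 : f 1 = f' 1 + if c then 1 else 0)
    (hs : ∀ s, f (s + 2) - f' (s + 2) = f (s + 1) - f' (s + 1) +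
      if (f' s + f' (s + 2) < 2 * f' (s + 1) ∧ f (s + 1) - f' (s + 1) = f s - f' s)
        then 1 else 0) :
    ∀ s, (kf P s : ℤ) = f s := by
  have key : ∀ s, (rho P s : ℤ) = f s - f' s ∧ (rho P (s + 1) : ℤ) = f (s + 1) - f' (s + 1) := by
    intro s
    induction s with
    | zero =>
      refine ⟨by rw [rho_zero, h0]; simp, ?_⟩
      rw [rho_succ, rho_zero, zero_add, h1, ← hc]
      split_ifs <;> simp_all
    | succ s ih =>
      refine ⟨ih.2, ?_⟩
      rw [show s + 1 + 1 = s + 2 by omega, rho_rec, hs, ← ih.1, ← ih.2, ← hf', ← hf', ← hf']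
      push_cast
      congr 1
      apply if_congr _ rfl rfl
      constructor
      · rintro ⟨a, b⟩; exact ⟨by omega, by omega⟩
      · rintro ⟨a, b⟩; exact ⟨by omega, by omega⟩
  intro s
  rw [kf_dP]
  have := (key s).1
  have := hf' s
  push_cast
  omega

lemma dP_pos (P : Multiset ℕ) (h : 0 ∉ P) : 0 ∉ dP P := by
  rw [dP, Multiset.mem_add, not_or]
  constructor
  · intro hh; exact h (Multiset.mem_of_le (Multiset.sub_le_self _ _) hh)
  · simp

lemma kf_big (P : Multiset ℕ) (s : ℕ) (h : P.sup ≤ s) : kf P s = P.sum := by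
  rw [kf]
  conv_rhs => rw [← Multiset.map_id P]
  congr 1
  apply Multiset.map_congr rfl
  intro x hx
  have := Multiset.le_sup hx
  simp; omega

lemma kf_le_sum (P : Multiset ℕ) (s : ℕ) : kf P s ≤ P.sum := by
  induction P using Multiset.induction_on with
  | empty => simp [kf]
  | cons a P ih =>
    simp only [kf, Multiset.map_cons, Multiset.sum_cons] at *
    omega

lemma dP_sum (P : Multiset ℕ) (h : 0 ∉ P) (hP : P ≠ 0) : (dP P).sum < P.sum := by
  have h1 := kf_dP P (max P.sup (dP P).sup)
  rw [kf_big P _ (by omega), kf_big (dP P) _ (by omega)] at h1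
  suffices h2 : 0 < rho P (max P.sup (dP P).sup) by omega
  obtain ⟨x, hx⟩ := Multiset.exists_mem_of_ne_zero hP
  have hx0 : 1 ≤ x := by
    by_contra hh
    have : x = 0 := by omega
    subst this; exact h hx
  have hsup := Multiset.le_sup hx
  rw [rho, Finset.card_pos]
  by_cases h3 : x + 1 ∈ Rset P
  · refine ⟨x + 1, Finset.mem_filter.2 ⟨h3, ?_⟩⟩
    have := (RsetGo_le _ _ _ h3).2
    omega
  · refine ⟨x, Finset.mem_filter.2 ⟨(Rset_iff P x hx0).2 ⟨Multiset.count_pos.2 hx, h3⟩, ?_⟩⟩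
    omega

lemma burgeGo_cons (n : ℕ) (P : Multiset ℕ) (c : Bool) (w : List Bool) (hw : w ≠ [])
    (h : burgeGo n P = c :: w) (hn : P.sum < n) (h0 : 0 ∉ P) :
    (if 1 ∈ Rset P then true else false) = c ∧
      ∃ n', burgeGo n' (dP P) = w ∧ (dP P).sum < n' ∧ 0 ∉ dP P := by
  cases n with
  | zero => simp [burgeGo] at h
  | succ n =>
    rw [burgeGo] at h
    split_ifs at h with hP h1
    · simp at h; exact absurd h.2.symm (by simpa using hw)
    · simp only [List.cons.injEq] at h
      refine ⟨by simp [h1, h.1], n, h.2, ?_, dP_pos P h0⟩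
      have := dP_sum P h0 hP; omega
    · simp only [List.cons.injEq] at h
      refine ⟨by simp [h1, h.1], n, h.2, ?_, dP_pos P h0⟩
      have := dP_sum P h0 hP; omega

lemma burgeGo_nil (n : ℕ) (P : Multiset ℕ) (h : burgeGo n P = [false])
    (hn : P.sum < n) (h0 : 0 ∉ P) : P = 0 := by
  cases n with
  | zero => simp [burgeGo] at h
  | succ n =>
    rw [burgeGo] at h
    split_ifs at h with hP h1
    · exact hP
    · simp at h
    · simp only [List.cons.injEq, true_and] at h
      have := dP_sum P h0 hP
      cases n with
      | zero => omega
      | succ n =>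
        rw [burgeGo] at h
        split_ifs at h


/-- regime lemma -/
lemma regime (p m T f' f : ℤ) (hf' : f' = min p (min m T)) (hf : f = min p (min (m + 1) (T + 2))) :
    (p ≤ m ∧ p ≤ T ∧ f' = p ∧ f = p) ∨ (m < p ∧ m ≤ T ∧ f' = m ∧ f = m + 1) ∨
    (T + 1 = p ∧ T < m ∧ f' = T ∧ f = T + 1) ∨ (T + 1 < p ∧ T < m ∧ f' = T ∧ f = T + 2) := by
  omega

/-- the recursion on three consecutive values -/
def Rec (a' b' c' a b c : ℤ) : Prop :=
  c - c' = b - b' + if (a' + c' < 2 * b' ∧ b - b' = a - a') then 1 else 0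

lemma Rec_iff (a' b' c' a b c : ℤ) : Rec a' b' c' a b c ↔
   ((a' + c' < 2 * b' ∧ b - b' = a - a') ∧ c - c' = b - b' + 1) ∨
   (¬ (a' + c' < 2 * b' ∧ b - b' = a - a') ∧ c - c' = b - b') := by
  unfold Rec; split_ifs <;> omega

set_option maxHeartbeats 4000000 in
lemma alpha_core (x y z k l e r n : ℤ) (hk : 1 ≤ k) (hr : k < r) (hl : 0 ≤ l) (hn : 0 ≤ n)
    (he : e = min l (r - k)) (hy : 0 ≤ y) (hyz : e = l → y = z)
    (H : (x = 0 ∧ y = 0 ∧ z = 0) ∨ (x ≥ k ∧ y ≥ l ∧ z ≥ e ∧ y - z ≥ l - e ∧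
      ((k ≤ e ∧ x - z ≤ k - e) ∨ (e < k ∧ x - z ≥ k - e))))
    (m0 m1 m2 : ℤ) (h0 : m0 = min (n + l + x) (n + l + r + z - 2 * e))
    (h1 : m1 = min (n + l + x + k) (n + l + r + z - e))
    (h2 : m2 = min (n + l + x + 2 * k) (n + l + r + z))
    (a' b' c' a b c : ℤ)
    (ha' : a' = min (x + y) (min m0 (2 * n + 2 * l + r)))
    (hb' : b' = min (x + y + k + l) (min m1 (2 * n + 2 * l + r)))
    (hc' : c' = min (x + y + 2 * k + 2 * l) (min m2 (2 * n + 2 * l + r)))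
    (ha : a = min (x + y) (min (m0 + 1) (2 * n + 2 * l + r + 2)))
    (hb : b = min (x + y + k + l) (min (m1 + 1) (2 * n + 2 * l + r + 2)))
    (hc : c = min (x + y + 2 * k + 2 * l) (min (m2 + 1) (2 * n + 2 * l + r + 2))) :
    Rec a' b' c' a b c := by
  have E : (e = l ∧ l ≤ r - k ∧ y = z) ∨ (e = r - k ∧ r - k < l ∧ True) := by
    rcases le_or_gt l (r - k) with h | h
    · have : e = l := by clear * - he h; omega
      exact Or.inl ⟨this, h, hyz this⟩
    · exact Or.inr ⟨by clear * - he h; omega, h, trivial⟩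
  have N0 : (m0 = n + l + x ∧ n + l + x ≤ n + l + r + z - 2 * e) ∨
    (m0 = n + l + r + z - 2 * e ∧ n + l + r + z - 2 * e < n + l + x) := by clear * - h0; omega
  have N1 : (m1 = n + l + x + k ∧ n + l + x + k ≤ n + l + r + z - e) ∨
    (m1 = n + l + r + z - e ∧ n + l + r + z - e < n + l + x + k) := by clear * - h1; omega
  have N2 : (m2 = n + l + x + 2 * k ∧ n + l + x + 2 * k ≤ n + l + r + z) ∨
    (m2 = n + l + r + z ∧ n + l + r + z < n + l + x + 2 * k) := by clear * - h2; omega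
  have M0 := regime _ _ _ _ _ ha' ha
  have M1 := regime _ _ _ _ _ hb' hb
  have M2 := regime _ _ _ _ _ hc' hc
  clear ha ha' hb hb' hc hc'
  clear he hyz h0 h1 h2
  rw [Rec_iff]
  rcases H with ⟨rfl, rfl, rfl⟩ | ⟨H1, H2, H3, H4, ⟨H5, H6⟩ | ⟨H5, H6⟩⟩ <;>
  rcases E with ⟨rfl, E, E2⟩ | ⟨rfl, E, E2⟩ <;>
  rcases N0 with ⟨rfl, N0⟩ | ⟨rfl, N0⟩ <;> 
  rcases N1 with ⟨rfl, N1⟩ | ⟨rfl, N1⟩ <;> 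
  rcases N2 with ⟨rfl, N2⟩ | ⟨rfl, N2⟩ <;> 
  try (exfalso; clear M0 M1 M2; omega)
  all_goals
    rcases M0 with ⟨A1, A2, rfl, rfl⟩ | ⟨A1, A2, rfl, rfl⟩ | ⟨A1, A2, rfl, rfl⟩ | ⟨A1, A2, rfl, rfl⟩ <;> 
    first | (exfalso; clear M1 M2; omega) | skip
  all_goals
    rcases M1 with ⟨B1, B2, rfl, rfl⟩ | ⟨B1, B2, rfl, rfl⟩ | ⟨B1, B2, rfl, rfl⟩ | ⟨B1, B2, rfl, rfl⟩ <;>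
    first | (exfalso; clear M2; omega) | skip
  all_goals
    rcases M2 with ⟨C1, C2, rfl, rfl⟩ | ⟨C1, C2, rfl, rfl⟩ | ⟨C1, C2, rfl, rfl⟩ | ⟨C1, C2, rfl, rfl⟩ <;>
    first | (left; refine ⟨⟨?_, ?_⟩, ?_⟩ <;> omega) | (right; refine ⟨fun h => ?_, ?_⟩ <;> omega) | skip

/-- explicit kernel function -/
def KK (n l r k : ℕ) (s : ℕ) : ℤ :=
  min ((s : ℤ) * (k + l)) (min (min (n + l + s * k)
    (n + l + r + ((s : ℤ) - 2) * min (l : ℤ) (r - k))) (2 * n + 2 * l + r))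

lemma KK_facts (s : ℕ) (k l e r : ℤ) (hk : 0 ≤ k) (he : e = min l (r - k)) (hl : 0 ≤ l)
    (hr : k < r) :
    (s * k = 0 ∧ s * l = 0 ∧ s * e = 0) ∨ (s * k ≥ k ∧ s * l ≥ l ∧ s * e ≥ e ∧ s * l - s * e ≥ l - e ∧
      ((k ≤ e ∧ s * k - s * e ≤ k - e) ∨ (e < k ∧ s * k - s * e ≥ k - e))) := by
  rcases Nat.eq_zero_or_pos s with rfl | h
  · left; simp
  right
  have h' : (1 : ℤ) ≤ s := by exact_mod_cast h
  have he0 : 0 ≤ e := by omega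
  have hel : e ≤ l := by omega
  refine ⟨by nlinarith, by nlinarith, by nlinarith, by nlinarith, ?_⟩
  rcases le_or_gt k e with h1 | h1
  · exact Or.inl ⟨h1, by nlinarith⟩
  · exact Or.inr ⟨h1, by nlinarith⟩

lemma KK_alpha (n l r k : ℕ) (hk : 1 ≤ k) (hr : k < r) (s : ℕ) :
    Rec (KK n l r k s) (KK n l r k (s + 1)) (KK n l r k (s + 2))
      (KK (n + 1) l r k s) (KK (n + 1) l r k (s + 1)) (KK (n + 1) l r k (s + 2)) := by
  obtain ⟨e, he⟩ : ∃ e : ℤ, e = min (l : ℤ) (r - k) := ⟨_, rfl⟩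
  have H := KK_facts s k l e r (by positivity) he (by positivity) (by exact_mod_cast hr)
  refine alpha_core (s * k) (s * l) (s * e) k l e r n (by exact_mod_cast hk) (by exact_mod_cast hr)
    (by positivity) (by positivity) he (by positivity) (by rintro rfl; rfl) H _ _ _ rfl rfl rfl
    _ _ _ _ _ _ ?_ ?_ ?_ ?_ ?_ ?_ <;> unfold KK <;> rw [← he] <;> clear * - <;> push_cast <;>
    ring_nf <;> clear * - <;> omega

lemma regime2 (m T f' f : ℤ) (hf' : f' = min m T) (hf : f = min (m + 1) (T + 2)) :
    (m ≤ T ∧ f' = m ∧ f = m + 1) ∨ (T < m ∧ f' = T ∧ f = T + 2) := by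
  omega

set_option maxHeartbeats 4000000 in
lemma beta_core (x z k l e r : ℤ) (hk : 1 ≤ k) (hr : k < r) (hl : r - k ≤ l)
    (he : e = r - k)
    (H : ((k ≤ e ∧ x - z ≤ k - e) ∨ (e < k ∧ x - z ≥ k - e)))
    (m0 m1 m2 : ℤ) (h0 : m0 = min (l + x) (l + r + z - 2 * e))
    (h1 : m1 = min (l + x + k) (l + r + z - e))
    (h2 : m2 = min (l + x + 2 * k) (l + r + z))
    (a' b' c' a b c : ℤ)
    (ha' : a' = (min m0 (2 * l + r)))
    (hb' : b' = (min m1 (2 * l + r)))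
    (hc' : c' = (min m2 (2 * l + r)))
    (ha : a = (min (m0 + 1) (2 * l + r + 2)))
    (hb : b = (min (m1 + 1) (2 * l + r + 2)))
    (hc : c = (min (m2 + 1) (2 * l + r + 2))) :
    Rec a' b' c' a b c := by
  have N : (m0 = l + x ∧ m1 = l + x + k ∧ m2 = l + x + 2 * k) ∨
     (m0 = l + r + z - 2 * e ∧ m1 = l + r + z - e ∧ m2 = l + r + z) := by
    clear ha ha' hb hb' hc hc'
    rcases H with H | H <;> omega
  have M0 := regime2 _ _ _ _ ha' ha
  have M1 := regime2 _ _ _ _ hb' hb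
  have M2 := regime2 _ _ _ _ hc' hc
  clear ha ha' hb hb' hc hc' h0 h1 h2
  rw [Rec_iff]
  rcases N with ⟨rfl, rfl, rfl⟩ | ⟨rfl, rfl, rfl⟩ <;>
  rcases M0 with ⟨A, rfl, rfl⟩ | ⟨A, rfl, rfl⟩ <;>
  rcases M1 with ⟨B, rfl, rfl⟩ | ⟨B, rfl, rfl⟩ <;>
  rcases M2 with ⟨C, rfl, rfl⟩ | ⟨C, rfl, rfl⟩ <;> omega

lemma KK0_small (l r k : ℕ) (hk : 1 ≤ k) (hr : k < r) (hl : l ≤ r - k) :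
    KK 0 l r k 1 = k + l ∧ KK 0 l r k 2 = l + min (2 * k : ℤ) r ∧
    ∀ s : ℕ, KK 0 l r k (s + 3) = min (l + s * k + 3 * k : ℤ) (2 * l + r) := by
  have he : min (l : ℤ) (r - k) = l := by omega
  unfold KK
  rw [he]
  refine ⟨?_, ?_, fun s => ?_⟩
  · push_cast; omega
  · push_cast; omega
  · have q1 : ((s + 3 : ℕ) : ℤ) * (k + l) = s * k + s * l + 3 * k + 3 * l := by push_cast; ring
    have q2 : (((s + 3 : ℕ) : ℤ) - 2) * l = s * l + l := by push_cast; ring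
    have q3 : ((s + 3 : ℕ) : ℤ) * k = s * k + 3 * k := by push_cast; ring
    rw [q1, q2, q3]
    have : 0 ≤ (s : ℤ) * l := by positivity
    generalize (s : ℤ) * l = y at *
    generalize (s : ℤ) * k = x at *
    clear q1 q2 q3 he
    push_cast
    omega

lemma KK0_big (l r k : ℕ) (hk : 1 ≤ k) (hr : k < r) (s : ℕ) (hl : r - k ≤ l) :
    KK 0 l r k (s + 1) = min (min (l + (s * k + k : ℤ)) (l + r + (s * (r - k) - (r - k)))) (2 * l + r) := by
  have he : min (l : ℤ) (r - k) = r - k := by omega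
  unfold KK
  rw [he]
  have q1 : ((s + 1 : ℕ) : ℤ) * (k + l) = s * k + s * l + k + l := by push_cast; ring
  have q2 : (((s + 1 : ℕ) : ℤ) - 2) * (r - k) = s * (r - k) - (r - k) := by push_cast; ring
  have q3 : ((s + 1 : ℕ) : ℤ) * k = s * k + k := by push_cast; ring
  rw [q1, q2, q3]
  have : 0 ≤ (s : ℤ) * l := by positivity
  generalize (s : ℤ) * l = y at *
  generalize (s : ℤ) * k = x at *
  generalize (s : ℤ) * (r - k) = z at *
  clear q1 q2 q3 he
  push_cast
  omega

lemma KK_zero (n l r k : ℕ) (hk : 1 ≤ k) (hr : k < r) : KK n l r k 0 = 0 := by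
  unfold KK
  push_cast
  omega

lemma KK_one (n l r k : ℕ) (hk : 1 ≤ k) (hr : k < r) : KK n l r k 1 = k + l := by
  unfold KK
  push_cast
  omega

lemma KK_beta (l r k : ℕ) (hk : 1 ≤ k) (hr : k < r) (s : ℕ) :
    Rec (KK 0 l r k s) (KK 0 l r k (s + 1)) (KK 0 l r k (s + 2))
      (KK 0 (l + 1) r k s) (KK 0 (l + 1) r k (s + 1)) (KK 0 (l + 1) r k (s + 2)) := by
  rcases lt_or_ge l (r - k) with hl | hl
  · obtain ⟨A1, A2, A3⟩ := KK0_small l r k hk hr hl.le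
    obtain ⟨B1, B2, B3⟩ := KK0_small (l + 1) r k hk hr hl
    match s with
    | 0 =>
      have := KK_zero 0 l r k hk hr
      have := KK_zero 0 (l + 1) r k hk hr
      rw [Rec_iff]
      simp only [zero_add] at *
      rw [A1, A2, B1, B2]
      push_cast
      omega
    | 1 =>
      have A4 := A3 0
      have B4 := B3 0
      rw [Rec_iff]
      simp only [zero_add, Nat.reduceAdd] at *
      rw [A1, A2, B1, B2, A4, B4]
      push_cast
      clear A1 A2 A3 A4 B1 B2 B3 B4
      omega
    | 2 =>
      have A4 := A3 0
      have B4 := B3 0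
      have A5 := A3 1
      have B5 := B3 1
      rw [Rec_iff]
      simp only [zero_add, Nat.reduceAdd] at *
      rw [A2, B2, A4, B4, A5, B5]
      push_cast
      clear A1 A2 A3 A4 B1 B2 B3 B4 A5 B5
      omega
    | s + 3 =>
      have A4 := A3 (s + 1)
      have B4 := B3 (s + 1)
      have A5 := A3 (s + 2)
      have B5 := B3 (s + 2)
      have q5 : ((s + 1 : ℕ) : ℤ) * k = s * k + k := by push_cast; ring
      have q6 : ((s + 2 : ℕ) : ℤ) * k = s * k + 2 * k := by push_cast; ring
      rw [q5] at A4 B4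
      rw [q6] at A5 B5
      have A6 := regime2 _ _ _ (KK 0 (l + 1) r k (s + 3)) (A3 s) (by rw [B3 s]; push_cast; omega)
      have A7 := regime2 _ _ _ (KK 0 (l + 1) r k (s + 1 + 3)) A4 (by rw [B4]; push_cast; omega)
      have A8 := regime2 _ _ _ (KK 0 (l + 1) r k (s + 2 + 3)) A5 (by rw [B5]; push_cast; omega)
      rw [show s + 3 + 1 = s + 1 + 3 by rfl, show s + 3 + 2 = s + 2 + 3 by rfl]
      rw [Rec_iff]
      clear A1 A2 A3 A4 B1 B2 B3 B4 A5 B5 q5 q6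
      generalize (s : ℤ) * k = x at *
      omega
  · match s with
    | 0 =>
      have := KK_zero 0 l r k hk hr
      have := KK_zero 0 (l + 1) r k hk hr
      have A2 := KK0_big l r k hk hr 1 hl
      have B2 := KK0_big (l + 1) r k hk hr 1 (by omega)
      have A1 := KK_one 0 l r k hk hr
      have B1 := KK_one 0 (l + 1) r k hk hr
      rw [Rec_iff]
      simp only [zero_add, Nat.reduceAdd] at *
      rw [A1, A2, B1, B2]
      push_cast
      clear A1 A2 B1 B2
      omega
    | s + 1 =>
      have hl1 : r - k ≤ l + 1 := by omega
      have hl2 : (r : ℤ) - k ≤ l := by omega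
      have A0 := KK0_big l r k hk hr s hl
      have B0 := KK0_big (l + 1) r k hk hr s hl1
      have A1 := KK0_big l r k hk hr (s + 1) hl
      have B1 := KK0_big (l + 1) r k hk hr (s + 1) hl1
      have A2 := KK0_big l r k hk hr (s + 2) hl
      have B2 := KK0_big (l + 1) r k hk hr (s + 2) hl1
      refine beta_core (s * k + k) (s * (r - k) + (r - k)) k l (r - k) r (by exact_mod_cast hk)
        (by exact_mod_cast hr) hl2 rfl ?_ _ _ _ rfl rfl rfl _ _ _ _ _ _ ?_ ?_ ?_ ?_ ?_ ?_
      · rcases le_or_gt (k : ℤ) (r - k) with h | h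
        · left; refine ⟨h, by nlinarith⟩
        · right; refine ⟨h, by nlinarith⟩
      · rw [A0]; clear * -; ring_nf
      · rw [A1]; push_cast; clear * -; ring_nf
      · rw [A2]; push_cast; clear * -; ring_nf
      · rw [B0]; push_cast; clear * -; ring_nf; clear * -; omega
      · rw [B1]; push_cast; clear * -; ring_nf; clear * -; omega
      · rw [B2]; push_cast; clear * -; ring_nf; clear * -; omega

lemma S1_rec (j : ℕ) (s : ℕ) :
    Rec (min (s * j : ℤ) j) (min ((s + 1 : ℕ) * j : ℤ) j) (min ((s + 2 : ℕ) * j : ℤ) j)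
     (min (s * (j + 1 : ℕ) : ℤ) (j + 1 : ℕ)) (min ((s + 1 : ℕ) * (j + 1 : ℕ) : ℤ) (j + 1 : ℕ))
     (min ((s + 2 : ℕ) * (j + 1 : ℕ) : ℤ) (j + 1 : ℕ)) := by
  have h : ∀ s j : ℕ, min ((s + 1 : ℕ) * (j : ℕ) : ℤ) j = j := by
    intro s j
    apply min_eq_right
    push_cast
    nlinarith [mul_nonneg (Int.natCast_nonneg s) (Int.natCast_nonneg j)]
  rw [h s, h s, show s + 2 = (s + 1) + 1 from rfl, h (s + 1), h (s + 1), Rec_iff]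
  rcases s with _ | s
  · push_cast; simp; omega
  · rw [h s, h s]
    push_cast
    omega

lemma S2_rec (k j : ℕ) (s : ℕ) (hk : 1 ≤ k) :
    Rec (min (s * k : ℤ) (k + j : ℕ)) (min ((s + 1 : ℕ) * k : ℤ) (k + j : ℕ))
     (min ((s + 2 : ℕ) * k : ℤ) (k + j : ℕ))
     (min (s * k : ℤ) (k + (j + 1) : ℕ)) (min ((s + 1 : ℕ) * k : ℤ) (k + (j + 1) : ℕ))
     (min ((s + 2 : ℕ) * k : ℤ) (k + (j + 1) : ℕ)) := by
  have q5 : ((s + 1 : ℕ) : ℤ) * k = s * k + k := by push_cast; ring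
  have q6 : ((s + 2 : ℕ) : ℤ) * k = s * k + 2 * k := by push_cast; ring
  rw [q5, q6, Rec_iff]
  push_cast
  clear q5 q6
  generalize (s : ℤ) * k = x
  omega

/-- one step, with Rec -/
lemma go_step (n : ℕ) (P : Multiset ℕ) (c : Bool) (w : List Bool) (hw : w ≠ [])
    (h : burgeGo n P = c :: w) (hn : P.sum < n) (h0 : 0 ∉ P) (f f' : ℕ → ℤ)
    (hyp : ∀ n P, burgeGo n P = w → P.sum < n → 0 ∉ P → ∀ s, (kf P s : ℤ) = f' s)
    (e0 : f 0 = f' 0) (e1 : f 1 = f' 1 + if c then 1 else 0)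
    (hR : ∀ s, Rec (f' s) (f' (s + 1)) (f' (s + 2)) (f s) (f (s + 1)) (f (s + 2))) :
    ∀ s, (kf P s : ℤ) = f s := by
  obtain ⟨hc, n', h1, h2, h3⟩ := burgeGo_cons n P c w hw h hn h0
  exact kf_step P c hc f f' (hyp n' _ h1 h2 h3) e0 e1 hR

lemma stage1 (j : ℕ) : ∀ n P, burgeGo n P = List.replicate j true ++ [false] → P.sum < n → 0 ∉ P →
    ∀ s, (kf P s : ℤ) = min (s * j : ℤ) j := by
  induction j with
  | zero =>
    intro n P h hn h0 s
    have := burgeGo_nil n P (by simpa using h) hn h0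
    subst this
    simp [kf]
  | succ j ih =>
    intro n P h hn h0
    rw [List.replicate_succ, List.cons_append] at h
    refine go_step n P true _ (by simp) h hn h0 (fun s => min (s * (j + 1 : ℕ) : ℤ) (j + 1 : ℕ))
      (fun s => min (s * j : ℤ) j) ih ?_ ?_ (fun s => S1_rec j s)
    · simp; omega
    · simp

lemma stage2 (k j : ℕ) (hk : 1 ≤ k) : ∀ n P,
    burgeGo n P = List.replicate j false ++ (List.replicate k true ++ [false]) → P.sum < n → 0 ∉ P →
    ∀ s, (kf P s : ℤ) = min (s * k : ℤ) (k + j : ℕ) := by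
  induction j with
  | zero =>
    intro n P h hn h0 s
    exact stage1 k n P (by simpa using h) hn h0 s
  | succ j ih =>
    intro n P h hn h0
    rw [List.replicate_succ, List.cons_append] at h
    refine go_step n P false _ (by simp) h hn h0 (fun s => min (s * k : ℤ) (k + (j + 1) : ℕ))
      (fun s => min (s * k : ℤ) (k + j : ℕ)) ih ?_ ?_ (fun s => S2_rec k j s hk)
    · simp; omega
    · simp; omega

lemma stage3 (r k l : ℕ) (hk : 1 ≤ k) (hr : k < r) : ∀ n P,
    burgeGo n P = List.replicate l true ++ (List.replicate (r - k) false ++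
      (List.replicate k true ++ [false])) → P.sum < n → 0 ∉ P →
    ∀ s, (kf P s : ℤ) = KK 0 l r k s := by
  induction l with
  | zero =>
    intro n P h hn h0 s
    rw [stage2 k (r - k) hk n P (by simpa using h) hn h0 s]
    have : min (0 : ℤ) (r - k) = 0 := by omega
    unfold KK
    push_cast
    rw [this]
    simp only [mul_zero, add_zero, zero_add]
    generalize (s : ℤ) * k = x
    omega
  | succ l ih =>
    intro n P h hn h0
    rw [List.replicate_succ, List.cons_append] at h
    refine go_step n P true _ (by simp) h hn h0 (KK 0 (l + 1) r k)
      (KK 0 l r k) ih ?_ ?_ (fun s => KK_beta l r k hk hr s)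
    · rw [KK_zero _ _ _ _ hk hr, KK_zero _ _ _ _ hk hr]
    · rw [KK_one _ _ _ _ hk hr, KK_one _ _ _ _ hk hr]; push_cast; simp; ring

lemma stage4 (n₀ r k l : ℕ) (hk : 1 ≤ k) (hr : k < r) : ∀ n P,
    burgeGo n P = List.replicate n₀ false ++ (List.replicate l true ++ (List.replicate (r - k) false ++
      (List.replicate k true ++ [false]))) → P.sum < n → 0 ∉ P →
    ∀ s, (kf P s : ℤ) = KK n₀ l r k s := by
  induction n₀ with
  | zero =>
    intro n P h hn h0 s
    exact stage3 r k l hk hr n P (by simpa using h) hn h0 s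
  | succ n₀ ih =>
    intro n P h hn h0
    rw [List.replicate_succ, List.cons_append] at h
    refine go_step n P false _ (by simp) h hn h0 (KK (n₀ + 1) l r k)
      (KK n₀ l r k) ih ?_ ?_ (fun s => KK_alpha n₀ l r k hk hr s)
    · rw [KK_zero _ _ _ _ hk hr, KK_zero _ _ _ _ hk hr]
    · rw [KK_one _ _ _ _ hk hr, KK_one _ _ _ _ hk hr]; simp

/-- The kernel dimensions prescribed by the Burge code. -/
theorem burge_kf (u r k l : ℕ) (hru : r < u) (hr : 2 ≤ r) (hk1 : 1 ≤ k) (hk2 : k ≤ r - 1)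
    (hl2 : l ≤ u - r)
    (P : Multiset ℕ) (hPpos : 0 ∉ P)
    (hcode : burgeCode P =
      List.replicate (u - r - l) false ++ List.replicate l true ++
        List.replicate (r - k) false ++ List.replicate k true ++ [false]) (s : ℕ) :
    (((P.map fun p => min p s).sum : ℕ) : ℤ) =
      min ((s : ℤ) * (k + l)) (min (min ((u : ℤ) - r + s * k)
        (u + ((s : ℤ) - 2) * min (l : ℤ) (r - k))) (2 * u - r)) := by
  have h := stage4 (u - r - l) r k l hk1 (by omega) _ P
    (by rw [← List.append_assoc, ← List.append_assoc, ← List.append_assoc]; exact hcode)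
    (Nat.lt_succ_self _) hPpos s
  rw [show (P.map fun p => min p s).sum = kf P s from rfl, h]
  unfold KK
  have h1 : (((u - r - l : ℕ) : ℤ) + l + s * k) = (u : ℤ) - r + s * k := by omega
  have h2 : (((u - r - l : ℕ) : ℤ) + l + r) = (u : ℤ) := by omega
  have h3 : (2 * ((u - r - l : ℕ) : ℤ) + 2 * l + r) = 2 * (u : ℤ) - r := by omega
  rw [h1, h2, h3]

open Polynomial

section KerSec
variable {F : Type*} [Field F]

/-- lattice of relations -/
def LL (u r : ℕ) (a g h b : F[X]) : Submodule F[X] (F[X] × F[X]) where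
  carrier := {v | ∃ c1 c2 c3 c4 : F[X], v.1 = c1 * a + c2 * (X ^ r * g) + c3 * X ^ u ∧
    v.2 = c1 * h + c2 * b + c4 * X ^ (u - r)}
  add_mem' := by
    rintro v w ⟨c1, c2, c3, c4, h1, h2⟩ ⟨d1, d2, d3, d4, h3, h4⟩
    refine ⟨c1 + d1, c2 + d2, c3 + d3, c4 + d4, ?_, ?_⟩
    · rw [Prod.fst_add, h1, h3]; ring
    · rw [Prod.snd_add, h2, h4]; ring
  zero_mem' := ⟨0, 0, 0, 0, by simp, by simp⟩
  smul_mem' := by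
    rintro c v ⟨c1, c2, c3, c4, h1, h2⟩
    refine ⟨c * c1, c * c2, c * c3, c * c4, ?_, ?_⟩
    · rw [Prod.smul_fst, h1, smul_eq_mul]; ring
    · rw [Prod.smul_snd, h2, smul_eq_mul]; ring

lemma mem_LL (u r : ℕ) (a g h b : F[X]) (v : F[X] × F[X]) : v ∈ LL u r a g h b ↔
    ∃ c1 c2 c3 c4 : F[X], v.1 = c1 * a + c2 * (X ^ r * g) + c3 * X ^ u ∧
    v.2 = c1 * h + c2 * b + c4 * X ^ (u - r) := Iff.rfl

/-- the projection to the module -/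
noncomputable def projV (F : Type*) [Field F] (u r : ℕ) : (F[X] × F[X]) →ₗ[F] (PQ F u × PQ F (u - r)) :=
  LinearMap.prodMap ((Submodule.mkQ (Ideal.span {(X : F[X]) ^ u})).restrictScalars F)
    ((Submodule.mkQ (Ideal.span {(X : F[X]) ^ (u - r)})).restrictScalars F)

lemma projV_surj (u r : ℕ) : Function.Surjective (projV F u r) := by
  rintro ⟨x, y⟩
  obtain ⟨p, rfl⟩ := Submodule.mkQ_surjective _ x
  obtain ⟨q, rfl⟩ := Submodule.mkQ_surjective _ y
  exact ⟨(p, q), rfl⟩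

lemma projV_eq (u r : ℕ) (v w : F[X] × F[X]) : projV F u r v = projV F u r w ↔
    X ^ u ∣ v.1 - w.1 ∧ X ^ (u - r) ∣ v.2 - w.2 := by
  rw [Prod.ext_iff]
  change (Submodule.Quotient.mk v.1 = Submodule.Quotient.mk w.1 ∧
    Submodule.Quotient.mk v.2 = Submodule.Quotient.mk w.2) ↔ _
  rw [Submodule.Quotient.eq, Submodule.Quotient.eq, Ideal.mem_span_singleton,
    Ideal.mem_span_singleton]

lemma Mmap_proj (u r : ℕ) (hru : r ≤ u) (a g h b : F[X]) (v : F[X] × F[X]) :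
    Mmap F u r hru a g h b (projV F u r v) =
      projV F u r (a * v.1 + X ^ r * g * v.2, h * v.1 + b * v.2) := rfl

lemma proj_mem_range (u r : ℕ) (hru : r ≤ u) (a g h b : F[X]) (v : F[X] × F[X]) :
    projV F u r v ∈ LinearMap.range (Mmap F u r hru a g h b) ↔ v ∈ LL u r a g h b := by
  rw [LinearMap.mem_range, mem_LL]
  constructor
  · rintro ⟨y, hy⟩
    obtain ⟨w, rfl⟩ := projV_surj u r y
    rw [Mmap_proj, eq_comm, projV_eq] at hy
    obtain ⟨⟨c3, h3⟩, ⟨c4, h4⟩⟩ := hy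
    refine ⟨w.1, w.2, c3, c4, ?_, ?_⟩
    · linear_combination h3
    · linear_combination h4
  · rintro ⟨c1, c2, c3, c4, h1, h2⟩
    refine ⟨projV F u r (c1, c2), ?_⟩
    rw [Mmap_proj, eq_comm, projV_eq]
    refine ⟨⟨c3, ?_⟩, ⟨c4, ?_⟩⟩
    · linear_combination h1
    · linear_combination h2

instance PQ_finite (m : ℕ) : Module.Finite F (PQ F m) :=
  (monic_X_pow m : (X ^ m : F[X]).Monic).finite_quotient

lemma finrank_span (p : F[X]) : Module.finrank F (F[X] ⧸ Ideal.span {p}) = p.natDegree := 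
  finrank_quotient_span_eq_natDegree

lemma PQ_finrank (m : ℕ) : Module.finrank F (PQ F m) = m := by
  rw [finrank_span]; simp

lemma ker_eq_quot (u r : ℕ) (hru : r ≤ u) (a g h b : F[X]) :
    Module.Finite F ((F[X] × F[X]) ⧸ LL u r a g h b) ∧
    Module.finrank F (LinearMap.ker (Mmap F u r hru a g h b)) =
      Module.finrank F ((F[X] × F[X]) ⧸ LL u r a g h b) := by
  set W := LinearMap.range (Mmap F u r hru a g h b) with hW
  let T : (F[X] × F[X]) →ₗ[F] ((PQ F u × PQ F (u - r)) ⧸ W) := W.mkQ ∘ₗ projV F u r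
  have hT : Function.Surjective T := (Submodule.mkQ_surjective _).comp (projV_surj u r)
  have hk : LinearMap.ker T = (LL u r a g h b).restrictScalars F := by
    ext v
    rw [LinearMap.mem_ker, Submodule.restrictScalars_mem, ← proj_mem_range u r hru]
    simp only [T, LinearMap.comp_apply, Submodule.mkQ_apply, Submodule.Quotient.mk_eq_zero]
    rfl
  have e1 := T.quotKerEquivOfSurjective hT
  rw [hk] at e1
  have e2 : ((F[X] × F[X]) ⧸ LL u r a g h b) ≃ₗ[F] ((PQ F u × PQ F (u - r)) ⧸ W) :=
    (Submodule.Quotient.restrictScalarsEquiv F (LL u r a g h b)).symm.trans e1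
  refine ⟨Module.Finite.equiv e2.symm, ?_⟩
  rw [e2.finrank_eq]
  have h1 := LinearMap.finrank_range_add_finrank_ker (Mmap F u r hru a g h b)
  have h2 := Submodule.finrank_quotient_add_finrank W
  rw [← hW] at h1
  omega

lemma LL_det (u r : ℕ) (a g h b d : F[X]) (hru : r ≤ u)
    (m1 : d ∣ a * b - X ^ r * g * h) (m2 : d ∣ X ^ (u - r) * a) (m3 : d ∣ X ^ u * h)
    (m4 : d ∣ X ^ u * g) (m5 : d ∣ X ^ u * b) (m6 : d ∣ X ^ (2 * u - r))
    (v w : F[X] × F[X]) (hv : v ∈ LL u r a g h b) (hw : w ∈ LL u r a g h b) :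
    d ∣ v.1 * w.2 - v.2 * w.1 := by
  obtain ⟨c1, c2, c3, c4, h1, h2⟩ := hv
  obtain ⟨d1, d2, d3, d4, h3, h4⟩ := hw
  obtain ⟨m1, e1⟩ := m1
  obtain ⟨m2, e2⟩ := m2
  obtain ⟨m3, e3⟩ := m3
  obtain ⟨m4, e4⟩ := m4
  obtain ⟨m5, e5⟩ := m5
  obtain ⟨m6, e6⟩ := m6
  have e4' : X ^ r * g * X ^ (u - r) = d * m4 := by
    rw [← e4, mul_right_comm, ← pow_add, Nat.add_sub_cancel' hru]
  have e6' : (X : F[X]) ^ u * X ^ (u - r) = d * m6 := by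
    rw [← e6, ← pow_add]; congr 1; omega
  refine ⟨(c1 * d2 - c2 * d1) * m1 + (c1 * d4 - c4 * d1) * m2 - (c1 * d3 - c3 * d1) * m3
    + (c2 * d4 - c4 * d2) * m4 - (c2 * d3 - c3 * d2) * m5 + (c3 * d4 - c4 * d3) * m6, ?_⟩
  rw [h1, h2, h3, h4]
  linear_combination (c1 * d2 - c2 * d1) * e1 + (c1 * d4 - c4 * d1) * e2 - (c1 * d3 - c3 * d1) * e3
    + (c2 * d4 - c4 * d2) * e4' - (c2 * d3 - c3 * d2) * e5 + (c3 * d4 - c4 * d3) * e6'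

/-- kernel dimension of a map given by a two by two matrix -/
theorem KER (u r : ℕ) (hru : r ≤ u) (a g h b : F[X]) (n : ℕ) :
    n ≤ Module.finrank F (LinearMap.ker (Mmap F u r hru a g h b)) ↔
    (X : F[X]) ^ n ∣ a * b - X ^ r * g * h ∧ (X : F[X]) ^ n ∣ X ^ (u - r) * a ∧
      (X : F[X]) ^ n ∣ X ^ u * h ∧ (X : F[X]) ^ n ∣ X ^ u * g ∧ (X : F[X]) ^ n ∣ X ^ u * b ∧
      n ≤ 2 * u - r := by
  obtain ⟨hfin, hrk⟩ := ker_eq_quot u r hru a g h b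
  rw [hrk]
  set L := LL u r a g h b with hL
  obtain ⟨p, hp⟩ := (IsPrincipalIdealRing.principal (L.map (LinearMap.fst F[X] F[X] F[X]))).principal
  obtain ⟨q, hq⟩ := (IsPrincipalIdealRing.principal (L.comap (LinearMap.inr F[X] F[X] F[X]))).principal
  have hpm : ∀ v ∈ L, p ∣ v.1 := by
    intro v hv
    have : v.1 ∈ L.map (LinearMap.fst F[X] F[X] F[X]) := ⟨v, hv, rfl⟩
    rw [hp] at this
    exact Ideal.mem_span_singleton.mp this
  have hqm : ∀ y, ((0 : F[X]), y) ∈ L ↔ q ∣ y := by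
    intro y
    have : y ∈ L.comap (LinearMap.inr F[X] F[X] F[X]) ↔ q ∣ y := by
      rw [hq]; exact Ideal.mem_span_singleton
    exact this
  obtain ⟨c, hc⟩ : ∃ c, (p, c) ∈ L := by
    have : p ∈ L.map (LinearMap.fst F[X] F[X] F[X]) := by
      rw [hp]; exact Ideal.mem_span_singleton_self p
    obtain ⟨v, hv, h1⟩ := this
    refine ⟨v.2, ?_⟩
    have : v = (p, v.2) := Prod.ext h1 rfl
    rwa [this] at hv
  -- rank
  have hrank : Module.finrank F ((F[X] × F[X]) ⧸ L) = p.natDegree + q.natDegree := by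
    let ψ : ((F[X] × F[X]) ⧸ L) →ₗ[F[X]] (F[X] ⧸ Ideal.span {p}) :=
      Submodule.mapQ L (Ideal.span {p}) (LinearMap.fst F[X] F[X] F[X])
        (fun v hv => Ideal.mem_span_singleton.mpr (hpm v hv))
    let φ : (F[X] ⧸ Ideal.span {q}) →ₗ[F[X]] ((F[X] × F[X]) ⧸ L) :=
      Submodule.mapQ (Ideal.span {q}) L (LinearMap.inr F[X] F[X] F[X])
        (fun y hy => (hqm y).mpr (Ideal.mem_span_singleton.mp hy))
    have hφ : Function.Injective φ := by
      rw [injective_iff_map_eq_zero]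
      intro y hy
      obtain ⟨y, rfl⟩ := Submodule.mkQ_surjective _ y
      have : Submodule.Quotient.mk (p := L) ((0 : F[X]), y) = 0 := hy
      rw [Submodule.Quotient.mk_eq_zero, hqm] at this
      exact (Submodule.Quotient.mk_eq_zero _).mpr (Ideal.mem_span_singleton.mpr this)
    have hψ : Function.Surjective ψ := by
      intro y
      obtain ⟨y, rfl⟩ := Submodule.mkQ_surjective _ y
      exact ⟨Submodule.Quotient.mk (y, 0), rfl⟩
    have hex : LinearMap.ker ψ = LinearMap.range φ := by
      ext v
      obtain ⟨v, rfl⟩ := Submodule.mkQ_surjective _ v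
      rw [LinearMap.mem_ker, LinearMap.mem_range]
      constructor
      · intro h0
        have : Submodule.Quotient.mk (p := Ideal.span {p}) v.1 = 0 := h0
        rw [Submodule.Quotient.mk_eq_zero, Ideal.mem_span_singleton] at this
        obtain ⟨z, hz⟩ := this
        refine ⟨Submodule.Quotient.mk (v.2 - z * c), ?_⟩
        change Submodule.Quotient.mk (p := L) ((0 : F[X]), v.2 - z * c) = Submodule.Quotient.mk v
        rw [Submodule.Quotient.eq]
        have : ((0 : F[X]), v.2 - z * c) - v = (-z) • (p, c) := by
          ext1
          · simp [hz, mul_comm]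
          · simp
        rw [this]
        exact L.smul_mem _ hc
      · rintro ⟨y, hy⟩
        obtain ⟨y, rfl⟩ := Submodule.mkQ_surjective _ y
        rw [← hy]
        change Submodule.Quotient.mk (p := Ideal.span {p}) (0 : F[X]) = 0
        simp
    have h1 := LinearMap.finrank_range_add_finrank_ker (ψ.restrictScalars F)
    have h2 : Module.finrank F (LinearMap.range (ψ.restrictScalars F)) = p.natDegree := by
      rw [LinearMap.range_eq_top.mpr (by exact hψ), finrank_top, finrank_span]
    have h3 : Module.finrank F (LinearMap.ker (ψ.restrictScalars F)) = q.natDegree := by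
      have : LinearMap.ker (ψ.restrictScalars F) = LinearMap.range (φ.restrictScalars F) := by
        ext v
        have := SetLike.ext_iff.mp hex v
        simpa using this
      rw [this, LinearMap.finrank_range_of_inj (by exact hφ), finrank_span]
    omega
  -- determinants
  have hdet : ∀ v ∈ L, ∀ w ∈ L, p * q ∣ v.1 * w.2 - v.2 * w.1 := by
    intro v hv w hw
    obtain ⟨α, hα⟩ := hpm v hv
    obtain ⟨β, hβ⟩ := hpm w hw
    have h1 : q ∣ v.2 - α * c := by
      rw [← hqm]
      have : ((0 : F[X]), v.2 - α * c) = v - α • (p, c) := by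
        ext1
        · simp [hα, mul_comm]
        · simp
      rw [this]
      exact L.sub_mem hv (L.smul_mem _ hc)
    have h2 : q ∣ w.2 - β * c := by
      rw [← hqm]
      have : ((0 : F[X]), w.2 - β * c) = w - β • (p, c) := by
        ext1
        · simp [hβ, mul_comm]
        · simp
      rw [this]
      exact L.sub_mem hw (L.smul_mem _ hc)
    obtain ⟨x, hx⟩ := h1
    obtain ⟨y, hy⟩ := h2
    refine ⟨α * y - x * β, ?_⟩
    rw [hα, hβ]
    linear_combination p * α * hy - p * β * hx
  have v1 : (a, h) ∈ L := ⟨1, 0, 0, 0, by simp, by simp⟩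
  have v2 : (X ^ r * g, b) ∈ L := ⟨0, 1, 0, 0, by simp, by simp⟩
  have v3 : ((X : F[X]) ^ u, (0 : F[X])) ∈ L := ⟨0, 0, 1, 0, by simp, by simp⟩
  have v4 : ((0 : F[X]), (X : F[X]) ^ (u - r)) ∈ L := ⟨0, 0, 0, 1, by simp, by simp⟩
  have d1 := hdet _ v1 _ v2
  have d2 := hdet _ v1 _ v4
  have d3 := hdet _ v3 _ v1
  have d4 := hdet _ v2 _ v4
  have d5 := hdet _ v3 _ v2
  have d6 := hdet _ v3 _ v4
  simp only [mul_zero, zero_mul, sub_zero] at d1 d2 d3 d4 d5 d6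
  have e6 : (X : F[X]) ^ u * X ^ (u - r) = X ^ (2 * u - r) := by
    rw [← pow_add]; congr 1; omega
  have e4 : X ^ r * g * X ^ (u - r) = X ^ u * g := by
    rw [mul_right_comm, ← pow_add, Nat.add_sub_cancel' hru]
  rw [e6] at d6
  rw [e4] at d4
  have hXp : Prime (X : F[X]) := prime_X
  obtain ⟨m, hm, hass⟩ := (dvd_prime_pow hXp _).mp d6
  have hdeg : p.natDegree + q.natDegree = m := by
    have h0 : p * q ≠ 0 := by
      intro h0
      rw [h0] at hass
      exact pow_ne_zero m hXp.ne_zero (hass.symm.eq_zero_iff.mpr rfl)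
    rw [← natDegree_mul (left_ne_zero_of_mul h0) (right_ne_zero_of_mul h0),
      natDegree_eq_of_degree_eq (degree_eq_degree_of_associated hass), natDegree_X_pow]
  rw [hrank, hdeg]
  have key : n ≤ m ↔ (X : F[X]) ^ n ∣ p * q := by
    rw [hass.dvd_iff_dvd_right, pow_dvd_pow_iff hXp.ne_zero hXp.not_isUnit]
  rw [key]
  constructor
  · intro hn
    refine ⟨?_, (hn.trans d2).trans (by rw [mul_comm]), hn.trans d3, hn.trans d4, hn.trans d5, ?_⟩
    · have := hn.trans d1
      have e : a * b - X ^ r * g * h = a * b - h * (X ^ r * g) := by ring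
      rwa [e]
    · rw [← key] at hn; omega
  · rintro ⟨c1, c2, c3, c4, c5, c6⟩
    have := LL_det u r a g h b (X ^ n) hru c1 c2 c3 c4 c5 (pow_dvd_pow _ c6) (p, c) (0, q) hc
      ((hqm q).mpr dvd_rfl)
    simpa using this

end KerSec

open Polynomial

section PowSec
variable {F : Type*} [Field F]

/-- Cayley-Hamilton sequence -/
noncomputable def QQ (T D : F[X]) : ℕ → F[X]
  | 0 => 0
  | 1 => 1
  | (s + 2) => T * QQ T D (s + 1) - D * QQ T D s

/-- the determinant -/
noncomputable def DD (r : ℕ) (a g h b : F[X]) : F[X] := a * b - X ^ r * g * h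

/-- entries of the powers -/
noncomputable def QS (r : ℕ) (a g h b : F[X]) (s : ℕ) : F[X] := QQ (a + b) (DD r a g h b) s

/-- entries of the powers -/
noncomputable def RS (r : ℕ) (a g h b : F[X]) : ℕ → F[X]
  | 0 => 0
  | (s + 1) => a * RS r a g h b s + QS r a g h b s

/-- entries of the powers -/
noncomputable def AS (r : ℕ) (a g h b : F[X]) (s : ℕ) : F[X] :=
  a ^ s + X ^ r * g * h * RS r a g h b s

/-- entries of the powers -/
noncomputable def BS (r : ℕ) (a g h b : F[X]) : ℕ → F[X]
  | 0 => 1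
  | (s + 1) => b * QS r a g h b (s + 1) - DD r a g h b * QS r a g h b s

lemma QS_rec (r : ℕ) (a g h b : F[X]) (s : ℕ) : QS r a g h b (s + 2) =
    (a + b) * QS r a g h b (s + 1) - DD r a g h b * QS r a g h b s := rfl

lemma QS_B (r : ℕ) (a g h b : F[X]) (s : ℕ) :
    QS r a g h b (s + 1) = a * QS r a g h b s + BS r a g h b s := by
  cases s with
  | zero => simp [QS, BS, QQ]
  | succ s => rw [QS_rec]; simp only [BS]; ring

lemma AS_rec (r : ℕ) (a g h b : F[X]) (s : ℕ) :
    AS r a g h b (s + 1) = a * AS r a g h b s + X ^ r * g * (h * QS r a g h b s) := by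
  simp only [AS, RS]; ring

lemma QS_A (r : ℕ) (a g h b : F[X]) (s : ℕ) :
    QS r a g h b (s + 1) = b * QS r a g h b s + AS r a g h b s := by
  induction s with
  | zero => simp [QS, QQ, AS, RS]
  | succ s ih =>
    rw [QS_rec, AS_rec]
    have : AS r a g h b s = QS r a g h b (s + 1) - b * QS r a g h b s := by rw [ih]; ring
    rw [this]
    simp only [DD]; ring

lemma BS_rec (r : ℕ) (a g h b : F[X]) (s : ℕ) :
    BS r a g h b (s + 1) = X ^ r * h * (g * QS r a g h b s) + b * BS r a g h b s := by
  have : BS r a g h b s = QS r a g h b (s + 1) - a * QS r a g h b s := by rw [QS_B]; ring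
  rw [this]
  simp only [BS, DD]; ring

lemma AB_det (r : ℕ) (a g h b : F[X]) (s : ℕ) :
    AS r a g h b s * BS r a g h b s - X ^ r * (g * QS r a g h b s) * (h * QS r a g h b s) =
      DD r a g h b ^ s := by
  induction s with
  | zero => simp [QS, QQ, AS, RS, BS]
  | succ s ih =>
    have e1 : g * QS r a g h b (s + 1) = a * (g * QS r a g h b s) + g * BS r a g h b s := by
      rw [QS_B]; ring
    have e2 : h * QS r a g h b (s + 1) = b * (h * QS r a g h b s) + h * AS r a g h b s := by
      rw [QS_A]; ring
    rw [e1, e2, AS_rec, BS_rec, pow_succ, ← ih]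
    simp only [DD]; ring

lemma Mmap_pow (u r : ℕ) (hru : r ≤ u) (a g h b : F[X]) (s : ℕ) :
    (Mmap F u r hru a g h b : Module.End F _) ^ s =
      Mmap F u r hru (AS r a g h b s) (g * QS r a g h b s) (h * QS r a g h b s) (BS r a g h b s) := by
  induction s with
  | zero =>
    refine LinearMap.ext fun v => ?_
    obtain ⟨v, rfl⟩ := projV_surj u r v
    rw [Mmap_proj]
    simp [QS, QQ, AS, RS, BS]
  | succ s ih =>
    refine LinearMap.ext fun v => ?_
    obtain ⟨v, rfl⟩ := projV_surj u r v
    rw [pow_succ', ih]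
    change Mmap F u r hru a g h b (Mmap F u r hru (AS r a g h b s) (g * QS r a g h b s)
      (h * QS r a g h b s) (BS r a g h b s) (projV F u r v)) = _
    rw [Mmap_proj, Mmap_proj, Mmap_proj]
    congr 1
    have e1 : g * QS r a g h b (s + 1) = a * (g * QS r a g h b s) + g * BS r a g h b s := by
      rw [QS_B]; ring
    have e2 : h * QS r a g h b (s + 1) = b * (h * QS r a g h b s) + h * AS r a g h b s := by
      rw [QS_A]; ring
    rw [e1, e2, AS_rec, BS_rec]
    ext1
    · simp only; ring
    · simp only; ring

/-- lower bound condition on the entries of the power `s` -/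
def Zge (r : ℕ) (a g h b : F[X]) (s m : ℕ) : Prop :=
  X ^ m ∣ AS r a g h b s ∧ X ^ m ∣ X ^ r * (h * QS r a g h b s) ∧
  X ^ m ∣ X ^ r * (g * QS r a g h b s) ∧ X ^ m ∣ X ^ r * BS r a g h b s

lemma Zge_mono (r : ℕ) (a g h b : F[X]) (s m m' : ℕ) (hm : m' ≤ m) (hz : Zge r a g h b s m) :
    Zge r a g h b s m' := by
  have : (X : F[X]) ^ m' ∣ X ^ m := pow_dvd_pow _ hm
  exact ⟨this.trans hz.1, this.trans hz.2.1, this.trans hz.2.2.1, this.trans hz.2.2.2⟩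

lemma Xpow_cancel (w n : ℕ) (p : F[X]) : (X : F[X]) ^ n ∣ X ^ w * p ↔ X ^ (n - w) ∣ p := by
  rcases le_total w n with h | h
  · obtain ⟨m, rfl⟩ := Nat.exists_eq_add_of_le h
    rw [pow_add, mul_dvd_mul_iff_left (pow_ne_zero _ X_ne_zero), Nat.add_sub_cancel_left]
  · rw [Nat.sub_eq_zero_of_le h, pow_zero]
    simp only [isUnit_one, IsUnit.dvd, iff_true]
    exact (pow_dvd_pow _ h).trans (dvd_mul_right _ _)

theorem KERs (u r : ℕ) (hru : r ≤ u) (a g h b : F[X]) (s n : ℕ) :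
    n ≤ Module.finrank F (LinearMap.ker ((Mmap F u r hru a g h b : Module.End F _) ^ s)) ↔
    X ^ n ∣ DD r a g h b ^ s ∧ Zge r a g h b s (n - (u - r)) ∧ n ≤ 2 * u - r := by
  rw [Mmap_pow, KER, AB_det]
  have e : ∀ p : F[X], (X : F[X]) ^ n ∣ X ^ u * p ↔ X ^ (n - (u - r)) ∣ X ^ r * p := by
    intro p
    rw [← Xpow_cancel, ← mul_assoc, ← pow_add, Nat.sub_add_cancel hru]
  rw [Xpow_cancel, e, e, e]
  unfold Zge
  tauto

/-- bounds -/
lemma QS_bound (r : ℕ) (a g h b : F[X]) (μ : ℕ) (ha : X ^ μ ∣ a) (hb : X ^ μ ∣ b)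
    (hD : X ^ (2 * μ) ∣ DD r a g h b) (s : ℕ) : X ^ (s * μ) ∣ QS r a g h b (s + 1) := by
  induction s using Nat.strong_induction_on with
  | _ s ih =>
    match s with
    | 0 => simp
    | 1 =>
      rw [QS_rec]
      simpa [QS, QQ] using dvd_add ha hb
    | s + 2 =>
      rw [QS_rec]
      apply dvd_sub
      · have := mul_dvd_mul (dvd_add ha hb) (ih (s + 1) (by omega))
        rwa [← pow_add, show μ + (s + 1) * μ = (s + 2) * μ by ring] at this
      · have := mul_dvd_mul hD (ih s (by omega))
        rwa [← pow_add, show 2 * μ + s * μ = (s + 2) * μ by ring] at this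

lemma RS_bound (r : ℕ) (a g h b : F[X]) (μ : ℕ) (ha : X ^ μ ∣ a) (hb : X ^ μ ∣ b)
    (hD : X ^ (2 * μ) ∣ DD r a g h b) (s : ℕ) : X ^ (s * μ) ∣ RS r a g h b (s + 2) := by
  induction s with
  | zero => simp
  | succ s ih =>
    rw [RS]
    apply dvd_add
    · have := mul_dvd_mul ha ih
      rwa [← pow_add, show μ + s * μ = (s + 1) * μ by ring] at this
    · exact QS_bound r a g h b μ ha hb hD (s + 1)

lemma BS_bound (r : ℕ) (a g h b : F[X]) (μ : ℕ) (ha : X ^ μ ∣ a) (hb : X ^ μ ∣ b)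
    (hD : X ^ (2 * μ) ∣ DD r a g h b) (s : ℕ) : X ^ (s * μ) ∣ BS r a g h b (s + 2) := by
  rw [BS]
  apply dvd_sub
  · exact (dvd_mul_of_dvd_right ((pow_dvd_pow _ (by nlinarith)).trans
      (QS_bound r a g h b μ ha hb hD (s + 1))) _)
  · exact (dvd_mul_of_dvd_right (QS_bound r a g h b μ ha hb hD s) _)

lemma Zge_L (r : ℕ) (a g h b : F[X]) (μ i m : ℕ) (hi : X ^ i ∣ a) (ha : X ^ μ ∣ a) (hb : X ^ μ ∣ b)
    (hD : X ^ (2 * μ) ∣ DD r a g h b) (s : ℕ) (h1 : m ≤ (s + 2) * i) (h2 : m ≤ r + s * μ) :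
    Zge r a g h b (s + 2) m := by
  have hq : (X : F[X]) ^ (s * μ) ∣ QS r a g h b (s + 2) :=
    (pow_dvd_pow _ (by nlinarith)).trans (QS_bound r a g h b μ ha hb hD (s + 1))
  have key : ∀ p : F[X], X ^ (s * μ) ∣ p → X ^ m ∣ X ^ r * p := by
    intro p hp
    refine (pow_dvd_pow _ h2).trans ?_
    rw [pow_add]
    exact mul_dvd_mul_left _ hp
  refine ⟨?_, key _ (dvd_mul_of_dvd_right hq _), key _ (dvd_mul_of_dvd_right hq _),
    key _ (BS_bound r a g h b μ ha hb hD s)⟩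
  unfold AS
  apply dvd_add
  · refine (pow_dvd_pow _ h1).trans ?_
    have := pow_dvd_pow_of_dvd hi (s + 2)
    rwa [← pow_mul, mul_comm] at this
  · rw [mul_assoc, mul_assoc]
    exact key _ (dvd_mul_of_dvd_right (dvd_mul_of_dvd_right (RS_bound r a g h b μ ha hb hD s) _) _)

lemma Zge_U (r : ℕ) (a g h b : F[X]) (μ i : ℕ) (hi : X ^ i ∣ a) (hi' : ¬ X ^ (i + 1) ∣ a)
    (ha : X ^ μ ∣ a) (hb : X ^ μ ∣ b)
    (hD : X ^ (2 * μ) ∣ DD r a g h b) (s : ℕ) (h2 : (s + 2) * i < r + s * μ) :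
    ¬ Zge r a g h b (s + 2) ((s + 2) * i + 1) := by
  rintro ⟨h1, -⟩
  unfold AS at h1
  have h3 : (X : F[X]) ^ ((s + 2) * i + 1) ∣ X ^ r * g * h * RS r a g h b (s + 2) := by
    refine (pow_dvd_pow _ (show (s + 2) * i + 1 ≤ r + s * μ by omega)).trans ?_
    rw [mul_assoc, mul_assoc, pow_add]
    exact mul_dvd_mul_left _ (dvd_mul_of_dvd_right (dvd_mul_of_dvd_right
      (RS_bound r a g h b μ ha hb hD s) _) _)
  have h4 := (dvd_add_left h3).mp h1
  obtain ⟨c, rfl⟩ := hi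
  rw [mul_pow, ← pow_mul, Xpow_cancel] at h4
  have : (s + 2) * i + 1 - i * (s + 2) = 1 := by
    rw [mul_comm]; omega
  rw [this, pow_one] at h4
  have h5 := prime_X.dvd_of_dvd_pow h4
  apply hi'
  rw [pow_succ]
  exact mul_dvd_mul_left _ h5

end PowSec

open Polynomial

section SlopeSec
variable {F : Type*} [Field F]

/-- exact order -/
def EX (n : ℕ) (p : F[X]) : Prop := ∃ q, p = X ^ n * q ∧ ¬ X ∣ q

lemma EX_of (n : ℕ) (p : F[X]) (h1 : X ^ n ∣ p) (h2 : ¬ X ^ (n + 1) ∣ p) : EX n p := by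
  obtain ⟨q, rfl⟩ := h1
  refine ⟨q, rfl, fun h => h2 ?_⟩
  rw [pow_succ]; exact mul_dvd_mul_left _ h

lemma EX_mul (n m : ℕ) (p q : F[X]) (h1 : EX n p) (h2 : EX m q) : EX (n + m) (p * q) := by
  obtain ⟨x, rfl, hx⟩ := h1
  obtain ⟨y, rfl, hy⟩ := h2
  refine ⟨x * y, by rw [pow_add]; ring, fun h => ?_⟩
  rcases prime_X.dvd_or_dvd h with h | h
  · exact hx h
  · exact hy h

lemma EX_add (n : ℕ) (p q : F[X]) (h1 : EX n p) (h2 : X ^ (n + 1) ∣ q) : EX n (p + q) := by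
  obtain ⟨x, rfl, hx⟩ := h1
  obtain ⟨y, rfl⟩ := h2
  refine ⟨x + X * y, by rw [pow_succ]; ring, fun h => hx ?_⟩
  exact (dvd_add_left (dvd_mul_right X y)).mp h

lemma EX_sub (n : ℕ) (p q : F[X]) (h1 : EX n p) (h2 : X ^ (n + 1) ∣ q) : EX n (p - q) := by
  rw [sub_eq_add_neg]; exact EX_add n p (-q) h1 ((dvd_neg).mpr h2)

lemma EX_dvd (n : ℕ) (p : F[X]) (h1 : EX n p) : X ^ n ∣ p := by
  obtain ⟨x, rfl, hx⟩ := h1; exact dvd_mul_right _ _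

lemma EX_iff (n : ℕ) (p : F[X]) (h1 : EX n p) (m : ℕ) (y : F[X]) :
    X ^ m ∣ p * y ↔ X ^ m ∣ X ^ n * y := by
  obtain ⟨x, rfl, hx⟩ := h1
  rw [mul_assoc, Xpow_cancel, Xpow_cancel]
  constructor
  · intro h
    exact prime_X.pow_dvd_of_dvd_mul_left _ hx h
  · intro h
    exact dvd_mul_of_dvd_right h _

lemma QS_exact (r : ℕ) (a g h b : F[X]) (j : ℕ) (ha : X ^ (j + 1) ∣ a) (hb : EX j b)
    (hD : X ^ (2 * j + 1) ∣ DD r a g h b) (s : ℕ) : EX (s * j) (QS r a g h b (s + 1)) := by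
  have hT : EX j (a + b) := by rw [add_comm]; exact EX_add j b a hb ha
  induction s using Nat.strong_induction_on with
  | _ s ih =>
    match s with
    | 0 =>
      refine ⟨1, by simp [QS, QQ], fun h => ?_⟩
      exact prime_X.not_isUnit (isUnit_of_dvd_one h)
    | 1 =>
      rw [QS_rec]
      simpa [QS, QQ] using hT
    | s + 2 =>
      rw [QS_rec]
      apply EX_sub
      · have := EX_mul _ _ _ _ hT (ih (s + 1) (by omega))
        rwa [show j + (s + 1) * j = (s + 2) * j by ring] at this
      · have := mul_dvd_mul hD (EX_dvd _ _ (ih s (by omega)))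
        rwa [← pow_add, show 2 * j + 1 + s * j = (s + 2) * j + 1 by ring] at this

lemma RS_exact (r : ℕ) (a g h b : F[X]) (j : ℕ) (ha : X ^ (j + 1) ∣ a) (hb : EX j b)
    (hD : X ^ (2 * j + 1) ∣ DD r a g h b) (s : ℕ) : EX (s * j) (RS r a g h b (s + 2)) := by
  induction s with
  | zero =>
    have := QS_exact r a g h b j ha hb hD 0
    simpa [RS, QS, QQ] using this
  | succ s ih =>
    rw [RS, add_comm (a * _)]
    apply EX_add
    · exact QS_exact r a g h b j ha hb hD (s + 1)
    · have := mul_dvd_mul ha (EX_dvd _ _ ih)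
      rwa [← pow_add, show j + 1 + s * j = (s + 1) * j + 1 by ring] at this

lemma BS_exact (r : ℕ) (a g h b : F[X]) (j : ℕ) (ha : X ^ (j + 1) ∣ a) (hb : EX j b)
    (hD : X ^ (2 * j + 1) ∣ DD r a g h b) (s : ℕ) : EX ((s + 2) * j) (BS r a g h b (s + 2)) := by
  rw [BS]
  apply EX_sub
  · have := EX_mul _ _ _ _ hb (QS_exact r a g h b j ha hb hD (s + 1))
    rwa [show j + (s + 1) * j = (s + 2) * j by ring] at this
  · have := mul_dvd_mul hD (EX_dvd _ _ (QS_exact r a g h b j ha hb hD s))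
    rwa [← pow_add, show 2 * j + 1 + s * j = (s + 2) * j + 1 by ring] at this

lemma Zge_exact (r : ℕ) (a g h b : F[X]) (j i : ℕ) (ha : X ^ (j + 1) ∣ a) (hb : EX j b)
    (hi : X ^ i ∣ a) (hD : X ^ (2 * j + 1) ∣ DD r a g h b) (s m : ℕ) (hm : m ≤ (s + 2) * i) :
    Zge r a g h b (s + 2) m ↔ X ^ m ∣ X ^ (s * j) * (X ^ r * g * h) ∧
      X ^ m ∣ X ^ ((s + 1) * j) * (X ^ r * h) ∧ X ^ m ∣ X ^ ((s + 1) * j) * (X ^ r * g) ∧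
      (X : F[X]) ^ m ∣ X ^ ((s + 2) * j) * X ^ r := by
  have h1 : X ^ m ∣ a ^ (s + 2) := by
    refine (pow_dvd_pow _ hm).trans ?_
    have := pow_dvd_pow_of_dvd hi (s + 2)
    rwa [← pow_mul, mul_comm] at this
  unfold Zge AS
  rw [dvd_add_right h1, mul_comm _ (RS r a g h b (s + 2)),
    EX_iff _ _ (RS_exact r a g h b j ha hb hD s), ← mul_assoc (X ^ r) h, ← mul_assoc (X ^ r) g,
    mul_comm _ (QS r a g h b (s + 2)), mul_comm _ (QS r a g h b (s + 2)),
    EX_iff _ _ (QS_exact r a g h b j ha hb hD (s + 1)),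
    EX_iff _ _ (QS_exact r a g h b j ha hb hD (s + 1)),
    mul_comm _ (BS r a g h b (s + 2)), EX_iff _ _ (BS_exact r a g h b j ha hb hD s)]

lemma Zge_slope (r : ℕ) (a g h b : F[X]) (j i : ℕ) (ha : X ^ (j + 1) ∣ a) (hb : EX j b)
    (hi : X ^ i ∣ a) (hD : X ^ (2 * j + 1) ∣ DD r a g h b) (s m : ℕ) (hm : m ≤ (s + 2) * i)
    (hji : j ≤ i) (hz : Zge r a g h b (s + 3) (m + j)) : Zge r a g h b (s + 2) m := by
  rw [Zge_exact r a g h b j i ha hb hi hD (s + 1) (m + j) (by nlinarith)] at hz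
  rw [Zge_exact r a g h b j i ha hb hi hD s m hm]
  have key : ∀ (n : ℕ) (p : F[X]), X ^ (m + j) ∣ X ^ ((n + 1) * j) * p → X ^ m ∣ X ^ (n * j) * p := by
    intro n p h
    rw [add_mul, one_mul, pow_add X (n * j), mul_right_comm, pow_add X m] at h
    exact (mul_dvd_mul_iff_right (pow_ne_zero _ X_ne_zero)).mp h
  exact ⟨key _ _ hz.1, key _ _ hz.2.1, key _ _ hz.2.2.1, key _ _ hz.2.2.2⟩

end SlopeSec

open Polynomial

section WXSec
variable {F : Type*} [Field F]


lemma star (v r k l e : ℕ) (hl1 : 1 ≤ l) (hl2 : l ≤ v) :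
    ∃ t, v + min ((t + 2) * k) (r + t * e) < (t + 2) * (k + l) ∧ (t + 1) * l ≤ v ∧
      (∀ t', t = t' + 1 → 
        (t' + 2) * (k + l) ≤ v + min ((t' + 2) * k) (r + t' * e)) := by
  classical
  have hex : ∃ t, v + min ((t + 2) * k) (r + t * e) < (t + 2) * (k + l) := by
    refine ⟨v, ?_⟩
    have h1 : min ((v + 2) * k) (r + v * e) ≤ (v + 2) * k := min_le_left _ _
    have : (v + 2) * (k + l) = (v + 2) * k + (v + 2) * l := by ring
    rw [this]
    have : v + 2 ≤ (v + 2) * l := Nat.le_mul_of_pos_right _ hl1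
    generalize min ((v + 2) * k) (r + v * e) = q at *
    omega
  refine ⟨Nat.find hex, Nat.find_spec hex, ?_⟩
  rcases h : Nat.find hex with _ | t
  · exact ⟨by omega, fun t' h => absurd h (by omega)⟩
  · have h2 := Nat.find_min hex (m := t) (by omega)
    push Not at h2
    refine ⟨?_, fun t' ht => by obtain rfl : t = t' := by omega
                                exact h2⟩
    have h1 : min ((t + 2) * k) (r + t * e) ≤ (t + 2) * k := min_le_left _ _
    have : (t + 2) * (k + l) = (t + 2) * k + (t + 2) * l := by ring
    have : (t + 1 + 1) * l = (t + 2) * l := by ring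
    clear h
    generalize min ((t + 2) * k) (r + t * e) = q at *
    omega

lemma exists_EX (k : ℕ) (a : F[X]) (h : ¬ X ^ k ∣ a) : ∃ i < k, EX i a := by
  induction k with
  | zero => simp at h
  | succ k ih =>
    by_cases h1 : X ^ k ∣ a
    · exact ⟨k, Nat.lt_succ_self k, EX_of _ _ h1 h⟩
    · obtain ⟨i, hi, h2⟩ := ih h1
      exact ⟨i, by omega, h2⟩

lemma EX_not (i : ℕ) (a : F[X]) (h : EX i a) : ¬ X ^ (i + 1) ∣ a := by
  obtain ⟨x, rfl, hx⟩ := h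
  intro h
  rw [pow_succ] at h
  exact hx ((mul_dvd_mul_iff_left (pow_ne_zero _ X_ne_zero)).mp h)


lemma WsubX_v (v r k l e : ℕ) (hel' : e ≤ l) (hek : e + k ≤ r) (hk1 : 1 ≤ k) (hk2 : k < r)
    (hl1 : 1 ≤ l) (hl2 : l ≤ v) (a g h b : F[X]) (κ : ℕ → ℕ)
    (hκ1 : κ 1 = k + l)
    (hκ : ∀ t, κ (t + 2) = min ((t + 2) * (k + l))
      (min (v + min ((t + 2) * k) (r + t * e)) (r + 2 * v)))
    (hker : ∀ s n, n ≤ κ s ↔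
      X ^ n ∣ DD r a g h b ^ s ∧ Zge r a g h b s (n - v) ∧ n ≤ r + 2 * v) :
    X ^ k ∣ a ∧ X ^ e ∣ b ∧ X ^ (k + l) ∣ DD r a g h b := by
  have hD : X ^ (k + l) ∣ DD r a g h b := by
    have := ((hker 1 (k + l)).mp hκ1.ge).1
    rwa [pow_one] at this
  have hEe : ∀ s m, v + m ≤ κ s → Zge r a g h b s m := by
    intro s m hm
    have := ((hker s _).mp hm).2.1
    rwa [Nat.add_sub_cancel_left] at this
  have hN : ∀ s m, κ s < s * (k + l) → κ s < r + 2 * v → Zge r a g h b s m → κ s + 1 ≤ v + m →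
      False := by
    intro s m h1 h2 hz hcon
    have : κ s + 1 ≤ κ s := by
      rw [hker]
      refine ⟨?_, Zge_mono _ _ _ _ _ _ m _ (Nat.sub_le_iff_le_add'.mpr hcon) hz, h2⟩
      refine (pow_dvd_pow _ (show κ s + 1 ≤ (k + l) * s by rw [mul_comm]; exact h1)).trans ?_
      rw [pow_mul]
      exact pow_dvd_pow_of_dvd hD s
    exact absurd this (Nat.not_succ_le_self _)
  have hab : X ^ (k + e) ∣ a * b := by
    have h1 : a * b = DD r a g h b + X ^ r * (g * h) := by unfold DD; ring
    rw [h1]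
    apply dvd_add
    · exact (pow_dvd_pow _ (by omega)).trans hD
    · exact dvd_mul_of_dvd_left (pow_dvd_pow _ (by omega)) _
  obtain ⟨t, ht1, ht2, ht3⟩ := star v r k l e hl1 hl2
  have hel : t * e ≤ t * l := Nat.mul_le_mul_left _ hel'
  have q1 : (t + 2) * (k + l) = t * k + t * l + 2 * k + 2 * l := by ring
  have q2 : (t + 2) * k = t * k + 2 * k := by ring
  have q3 : (t + 1) * l = t * l + l := by ring
  have q4 : (t + 1) * e = t * e + e := by ring
  have q5 : (t + 3) * (k + l) = t * k + t * l + 3 * k + 3 * l := by ring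
  have q6 : (t + 3) * k = t * k + 3 * k := by ring
  have hκt := hκ t
  have hκt1 : κ (t + 3) = _ := hκ (t + 1)
  rw [show t + 1 + 2 = t + 3 from rfl] at hκt1
  rw [q1, q2] at hκt
  rw [q5, q6, q4] at hκt1
  rw [q3] at ht2
  rw [q1, q2] at ht1
  obtain ⟨ζ, hζ⟩ : ∃ ζ, ζ = min (t * k + 2 * k) (r + t * e) := ⟨_, rfl⟩
  rw [← hζ] at ht1 hκt
  have hζk : ζ ≤ t * k + 2 * k := hζ ▸ min_le_left _ _
  have hζe : ζ ≤ r + t * e := hζ ▸ min_le_right _ _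
  have hζm : ∀ m, m ≤ t * k + 2 * k → m ≤ r + t * e → m ≤ ζ := by
    intro m h1 h2; rw [hζ]; exact le_min h1 h2
  have hκs : κ (t + 2) = v + ζ := by
    rw [hκt, min_eq_right, min_eq_left]
    · clear * - hζe hel ht2; omega
    · exact (min_le_left _ _).trans ht1.le
  have h3m : ∀ m, m ≤ t * k + t * l + 3 * k + 3 * l → m ≤ v + (t * k + 3 * k) →
      m ≤ v + (r + (t * e + e)) → m ≤ r + 2 * v → m ≤ κ (t + 3) := by
    intro m h1 h2 h3 h4
    rw [hκt1]
    refine le_min h1 (le_min ?_ h4)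
    rw [← min_add_add_left]
    exact le_min h2 h3
  have h3e : κ (t + 3) ≤ v + (r + (t * e + e)) := by
    rw [hκt1]
    exact (min_le_right _ _).trans ((min_le_left _ _).trans
      (Nat.add_le_add_left (min_le_right _ _) _))
  have h3k : κ (t + 3) ≤ v + (t * k + 3 * k) := by
    rw [hκt1]
    exact (min_le_right _ _).trans ((min_le_left _ _).trans
      (Nat.add_le_add_left (min_le_left _ _) _))
  have h3lt : κ (t + 3) < t * k + t * l + 3 * k + 3 * l := by
    rcases min_choice (t * k + 2 * k) (r + t * e) with hc | hc <;> rw [hc] at hζ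
    · clear * - hζ h3k ht1 hl1; omega
    · clear * - hζ h3e ht1 hel' hl1 hk1; omega
  clear hκt hκt1 hζ
  have hκ1' := hκ1
  clear hκ1
  have hZ : Zge r a g h b (t + 2) ζ := hEe _ _ hκs.ge
  have hZ' : ¬ Zge r a g h b (t + 2) (ζ + 1) := by
    intro hz
    refine hN _ _ ?_ ?_ hz ?_
    · rw [q1, hκs]; exact ht1
    · rw [hκs]; clear * - hζe hel ht2 hl1; omega
    · rw [hκs]; rfl
  have hXk : X ^ k ∣ a := by
    by_contra hcon
    obtain ⟨i, hik, hi⟩ := exists_EX k a hcon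
    have hj : X ^ (k + e - i) ∣ b := by
      rw [EX_iff i a hi, Xpow_cancel] at hab
      exact hab
    have hid := EX_dvd _ _ hi
    have hin := EX_not _ _ hi
    have hlu : l < v := by
      rcases Nat.lt_or_ge l v with h1 | h1
      · exact h1
      · exfalso
        apply hcon
        have := (hEe 1 k (by rw [hκ1']; clear * - h1; omega)).1
        simpa [AS, RS, QS, QQ] using this
    have p1 : (t + 2) * i = t * i + 2 * i := by ring
    rcases Nat.lt_or_ge e i with hei | hei
    · -- i > e
      have m1 : X ^ (e + 1) ∣ a := (pow_dvd_pow _ hei).trans hid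
      have m2 : X ^ (e + 1) ∣ b := (pow_dvd_pow _ (by clear * - hik; omega)).trans hj
      have m3 : X ^ (2 * (e + 1)) ∣ DD r a g h b :=
        (pow_dvd_pow _ (by clear * - hei hik hel'; omega)).trans hD
      have p2 : t * (e + 1) = t * e + t := by ring
      have p3 : (t + 1) * (e + 1) = t * e + t + e + 1 := by ring
      have p4 : (t + 1 + 2) * i = t * i + 3 * i := by ring
      have hik' : t * i ≤ t * k := Nat.mul_le_mul_left _ hik.le
      have hL := fun m => Zge_L r a g h b (e + 1) i m hid m1 m2 m3 t
      have hU := Zge_U r a g h b (e + 1) i hid hin m1 m2 m3 t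
      have hL1 := fun m => Zge_L r a g h b (e + 1) i m hid m1 m2 m3 (t + 1)
      rw [p1, p2] at hL hU
      rw [p4, p3] at hL1
      have hi2 : t * i + 2 * i < r + (t * e + t) → ζ ≤ t * i + 2 * i := by
        intro c1
        by_contra c2
        exact hU c1 (Zge_mono _ _ _ _ _ _ _ _ (Nat.lt_of_not_le c2) hZ)
      have hnext : Zge r a g h b (t + 1 + 2) (r + t * e + e + 1) → v ≤ t * e + e := by
        intro hz
        by_contra hc
        have hz' : Zge r a g h b (t + 3) (r + t * e + e + 1) := hz
        refine hN _ _ ?_ ?_ hz' ?_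
        · rw [q5]; exact h3lt
        · clear * - h3e hc; omega
        · clear * - h3e; omega
      rcases t with _ | t'
      · have h2i : r ≤ 2 * i := by
          by_contra hc
          have c1 := hi2 (by clear * - hc; omega)
          have c2 := hζm (2 * i + 1) (by clear * - hik; omega) (by clear * - hc; omega)
          clear * - c1 c2; omega
        have := hnext (hL1 _ (by clear * - h2i hei; omega) (by clear * - e; omega))
        clear * - this hlu hel'; omega
      · have hi1' : (t' + 1) * i + 2 * i ≤ ζ := by
          by_contra hc
          exact hZ' (hL _ (by clear * - hc; omega) (by clear * - hζe; omega))
        have hi3 : (t' + 1) * i + 2 * i = r + (t' + 1) * e := by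
          have c0 : (t' + 1) * i < (t' + 1) * k := Nat.mul_lt_mul_of_pos_left hik (by omega)
          have c1 := hi2 (by clear * - hi1' hζe; omega)
          by_contra hc
          have c2 := hζm ((t' + 1) * i + 2 * i + 1) (by clear * - c0 hik; omega)
            (by clear * - hi1' hζe hc; omega)
          clear * - c1 c2; omega
        have hve := hnext (hL1 _ (by clear * - hi3 hei; omega) (by clear * - e; omega))
        have hU' := Zge_U r a g h b (e + 1) i hid hin m1 m2 m3 t'
        have z1 : (t' + 2) * i = t' * i + 2 * i := by ring
        have z2 : (t' + 1) * i = t' * i + i := by ring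
        have z3 : (t' + 1) * e = t' * e + e := by ring
        have z4 : t' * (e + 1) = t' * e + t' := by ring
        have hU'' := hU' (by rw [z1, z4]; clear * - z2 z3 hi3 hei; omega)
        have hκ' : κ (t' + 2) ≤ v + (t' + 2) * i := by
          by_contra hc
          exact hU'' (hEe _ _ (by clear * - hc; omega))
        have hκ2 := hκ t'
        have ht' := ht3 t' rfl
        have y0 : min ((t' + 2) * k) (r + t' * e) ≤ r + t' * e := min_le_right _ _
        have hκ3 : κ (t' + 2) = (t' + 2) * (k + l) := by
          rw [hκ2]; apply min_eq_left; apply le_min ht'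
          generalize min ((t' + 2) * k) (r + t' * e) = q at *
          clear * - ht' y0 hel z3 ht2
          omega
        have z5 : (t' + 2) * e = (t' + 1) * e + e := by ring
        have z6 : (t' + 2) * (k + l) ≤ (t' + 2) * (e + i) := by
          rw [mul_add (t' + 2) e i, z5, ← hκ3]; clear * - hκ' hve; omega
        have := Nat.le_of_mul_le_mul_left z6 (by omega)
        clear * - this hik hel'; omega
    · -- i ≤ e
      have m2 : X ^ i ∣ b := (pow_dvd_pow _ (by clear * - hik hei; omega)).trans hj
      have m3 : X ^ (2 * i) ∣ DD r a g h b :=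
        (pow_dvd_pow _ (by clear * - hik hei hel'; omega)).trans hD
      have hU := Zge_U r a g h b i i hid hin hid m2 m3 t
      rw [p1] at hU
      have h1 : t * i ≤ t * k := Nat.mul_le_mul_left _ hik.le
      have h2 : t * i ≤ t * e := Nat.mul_le_mul_left _ hei
      exact hU (by clear * - hik hei hek; omega) (Zge_mono _ _ _ _ _ _ _ _
        (hζm _ (by clear * - h1 hik; omega) (by clear * - h2 hei hik hek; omega)) hZ)
  refine ⟨hXk, ?_, hD⟩
  by_contra hcon
  obtain ⟨j, hje, hj⟩ := exists_EX e b hcon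
  have hi : X ^ (k + 1) ∣ a := by
    rw [mul_comm, EX_iff j b hj, Xpow_cancel] at hab
    exact (pow_dvd_pow _ (by clear * - hje; omega)).trans hab
  have hjd := EX_dvd _ _ hj
  have p1 : (t + 2) * (k + 1) = t * k + t + 2 * k + 2 := by ring
  rcases Nat.lt_or_ge j k with hjk | hjk
  · have m1 : X ^ (j + 1) ∣ a := (pow_dvd_pow _ hjk).trans hXk
    have m3 : X ^ (2 * j + 1) ∣ DD r a g h b :=
      (pow_dvd_pow _ (by clear * - hjk hje hel'; omega)).trans hD
    have hS := Zge_slope r a g h b j (k + 1) m1 hj hi m3 t (ζ + 1)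
      (by rw [p1]; clear * - hζk; omega) (by clear * - hjk; omega)
    refine hZ' (hS (hEe _ _ (h3m _ ?_ ?_ ?_ ?_)))
    · clear * - ht1 hjk; omega
    · clear * - hζk hjk; omega
    · clear * - hζe hje; omega
    · clear * - hζe hje hel ht2 hel'; omega
  · have m1 : X ^ k ∣ b := (pow_dvd_pow _ hjk).trans hjd
    have m3 : X ^ (2 * k) ∣ DD r a g h b :=
      (pow_dvd_pow _ (by clear * - hje hjk hel'; omega)).trans hD
    have hL := Zge_L r a g h b k (k + 1) (ζ + 1) hi hXk m1 m3 t
      (by rw [p1]; clear * - hζk; omega) (by clear * - hζk hje hjk hek; omega)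
    exact hZ' hL

end WXSec

open Polynomial

section PrimeSec

def PF {F : Type*} [Field F] {τ : Type*} (φ : (τ → F) → F) : Prop :=
  ∃ p : MvPolynomial τ F, ∀ y, φ y = MvPolynomial.eval y p

variable {F : Type*} [Field F] {τ : Type*}

lemma PF_const (c : F) : PF (fun _ : τ → F => c) := ⟨MvPolynomial.C c, fun y => by simp⟩
lemma PF_var (i : τ) : PF (fun y : τ → F => y i) := ⟨MvPolynomial.X i, fun y => by simp⟩
lemma PF_add {φ ψ : (τ → F) → F} (h1 : PF φ) (h2 : PF ψ) : PF (fun y => φ y + ψ y) := by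
  obtain ⟨p, hp⟩ := h1
  obtain ⟨q, hq⟩ := h2
  exact ⟨p + q, fun y => by simp [hp, hq]⟩
lemma PF_mul {φ ψ : (τ → F) → F} (h1 : PF φ) (h2 : PF ψ) : PF (fun y => φ y * ψ y) := by
  obtain ⟨p, hp⟩ := h1
  obtain ⟨q, hq⟩ := h2
  exact ⟨p * q, fun y => by simp [hp, hq]⟩
lemma PF_sum {ι : Type*} (s : Finset ι) (φ : ι → (τ → F) → F) (h : ∀ i, PF (φ i)) :
    PF (fun y => ∑ i ∈ s, φ i y) := by
  classical
  choose p hp using h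
  exact ⟨∑ i ∈ s, p i, fun y => by simp [hp, map_sum]⟩
lemma PF_neg {φ : (τ → F) → F} (h1 : PF φ) : PF (fun y => - φ y) := by
  obtain ⟨p, hp⟩ := h1
  exact ⟨-p, fun y => by simp [hp]⟩
lemma PF_prod {ι : Type*} (s : Finset ι) (φ : ι → (τ → F) → F) (h : ∀ i, PF (φ i)) :
    PF (fun y => ∏ i ∈ s, φ i y) := by
  classical
  choose p hp using h
  exact ⟨∏ i ∈ s, p i, fun y => by simp [hp, map_prod]⟩
lemma PF_comp {σ : Type*} {f : (σ → F) → F} (hf : PF f) (Φ : (τ → F) → σ → F)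
    (hΦ : ∀ i, PF (fun y => Φ y i)) : PF (fun y => f (Φ y)) := by
  obtain ⟨p, hp⟩ := hf
  choose q hq using hΦ
  refine ⟨MvPolynomial.bind₁ q p, fun y => ?_⟩
  change f (Φ y) = _
  rw [hp]
  have : Φ y = fun i => MvPolynomial.eval y (q i) := funext fun i => hq i y
  rw [this]
  simp only [← MvPolynomial.coe_aeval_eq_eval, RingHom.coe_coe]
  rw [MvPolynomial.aeval_bind₁]

lemma PF_dom [Infinite F] {φ ψ : (τ → F) → F} (h1 : PF φ) (h2 : PF ψ)
    (h : ∀ y, φ y * ψ y = 0) : (∀ y, φ y = 0) ∨ (∀ y, ψ y = 0) := by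
  obtain ⟨p, hp⟩ := h1
  obtain ⟨q, hq⟩ := h2
  have : p * q = 0 := by
    apply MvPolynomial.funext
    intro y
    simp [← hp, ← hq, h]
  rcases mul_eq_zero.mp this with rfl | rfl
  · left; intro y; simp [hp]
  · right; intro y; simp [hq]

/-- coefficientwise polynomial families of power series -/
def CP (φ : (τ → F) → PowerSeries F) : Prop := ∀ n, PF (fun y => PowerSeries.coeff n (φ y))

lemma CP_const (c : PowerSeries F) : CP (fun _ : τ → F => c) := fun _ => PF_const _
lemma CP_add {φ ψ : (τ → F) → PowerSeries F} (h1 : CP φ) (h2 : CP ψ) :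
    CP (fun y => φ y + ψ y) := fun n => by simpa using PF_add (h1 n) (h2 n)
lemma CP_mul {φ ψ : (τ → F) → PowerSeries F} (h1 : CP φ) (h2 : CP ψ) :
    CP (fun y => φ y * ψ y) := fun n => by
  simp only [PowerSeries.coeff_mul]
  exact PF_sum _ (fun (i : ℕ × ℕ) y => PowerSeries.coeff i.1 (φ y) * PowerSeries.coeff i.2 (ψ y))
    fun i => PF_mul (h1 _) (h2 _)
lemma CP_C {φ : (τ → F) → F} (h : PF φ) : CP (fun y => PowerSeries.C (φ y)) := fun n => by
  simp only [PowerSeries.coeff_C]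
  split_ifs
  · exact h
  · exact PF_const _

noncomputable def psiV (u r k e : ℕ) (A G H B : PowerSeries F) : Vars u r → F :=
  Sum.elim (fun i => PowerSeries.coeff ((i : ℕ) + 1) (PowerSeries.X ^ k * A))
    (Sum.elim (fun i => PowerSeries.coeff ((i : ℕ) + 1) (PowerSeries.X ^ e * B))
      (Sum.elim (fun i => PowerSeries.coeff (i : ℕ) G) (fun i => PowerSeries.coeff (i : ℕ) H)))

lemma PF_psi {u r : ℕ} (k e : ℕ) {f : (Vars u r → F) → F} (hf : PF f)
    {A G H B : (τ → F) → PowerSeries F} (hA : CP A) (hG : CP G) (hH : CP H) (hB : CP B) :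
    PF (fun y => f (psiV u r k e (A y) (G y) (H y) (B y))) := by
  apply PF_comp hf
  rintro (i | i | i | i)
  · exact CP_mul (CP_const _) hA _
  · exact CP_mul (CP_const _) hB _
  · exact hG _
  · exact hH _

variable [Infinite F]

/-- a polynomial function vanishing on the chart image vanishes on all of `Y_c` -/
lemma chart_unit {u r : ℕ} (k e c : ℕ) {f : (Vars u r → F) → F}
    (hv : ∀ S0 S1 S2 S3 : PowerSeries F, f (psiV u r k e S0 (S0 * S2) (S1 * S0)
      (S1 * S0 * S2 + PowerSeries.X ^ c * S3)) = 0)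
    (A G H B : PowerSeries F) (hA : PowerSeries.constantCoeff A ≠ 0)
    (hd : PowerSeries.X ^ c ∣ A * B - G * H) : f (psiV u r k e A G H B) = 0 := by
  obtain ⟨w, hw⟩ := hd
  have hi : A * A⁻¹ = 1 := PowerSeries.mul_inv_cancel A hA
  have := hv A (A⁻¹ * H) (A⁻¹ * G) (A⁻¹ * w)
  have e1 : A * (A⁻¹ * G) = G := by rw [← mul_assoc, hi, one_mul]
  have e2 : A⁻¹ * H * A = H := by
    calc A⁻¹ * H * A = (A * A⁻¹) * H := by ring
      _ = H := by rw [hi, one_mul]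
  have e3 : H * (A⁻¹ * G) + PowerSeries.X ^ c * (A⁻¹ * w) = B := by
    calc H * (A⁻¹ * G) + PowerSeries.X ^ c * (A⁻¹ * w)
        = A⁻¹ * (G * H) + A⁻¹ * (PowerSeries.X ^ c * w) := by ring
      _ = A * A⁻¹ * B := by rw [← hw]; ring
      _ = B := by rw [hi, one_mul]
  rw [e1, e2, e3] at this
  exact this

lemma chart_dvd {u r : ℕ} (k e c : ℕ) {f : (Vars u r → F) → F} (hf : PF f)
    (hv : ∀ A G H B : PowerSeries F, PowerSeries.constantCoeff A ≠ 0 →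
      PowerSeries.X ^ c ∣ A * B - G * H → f (psiV u r k e A G H B) = 0)
    (A G H B : PowerSeries F) (hG : A ∣ G) (hH : A ∣ H)
    (hd : PowerSeries.X ^ c ∣ A * B - G * H) : f (psiV u r k e A G H B) = 0 := by
  obtain ⟨y, rfl⟩ := hG
  obtain ⟨x, rfl⟩ := hH
  obtain ⟨ε, hε⟩ : ∃ ε, ε = B - x * A * y := ⟨_, rfl⟩
  have hB : B = x * A * y + ε := by rw [hε]; ring
  have hS : PF (fun s : Unit → F => s ()) := PF_var ()
  have cS := CP_C hS
  have cA : CP (fun s : Unit → F => A + PowerSeries.C (s ()) * PowerSeries.C (s ())) :=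
    CP_add (CP_const _) (CP_mul cS cS)
  have cG : CP (fun s : Unit → F => (A + PowerSeries.C (s ()) * PowerSeries.C (s ())) * y
      + PowerSeries.C (s ())) := CP_add (CP_mul cA (CP_const _)) cS
  have cH : CP (fun s : Unit → F => x * (A + PowerSeries.C (s ()) * PowerSeries.C (s ()))
      + PowerSeries.C (s ()) * ε) := CP_add (CP_mul (CP_const _) cA) (CP_mul cS (CP_const _))
  have cB : CP (fun s : Unit → F => (x * (A + PowerSeries.C (s ()) * PowerSeries.C (s ()))
      + PowerSeries.C (s ()) * ε) * y + (x * PowerSeries.C (s ()) + ε)) :=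
    CP_add (CP_mul cH (CP_const _)) (CP_add (CP_mul (CP_const _) cS) (CP_const _))
  have p1 := PF_psi k e hf cA cG cH cB
  have p2 : PF (fun s : Unit → F => PowerSeries.constantCoeff A + s () * s ()) :=
    PF_add (PF_const _) (PF_mul hS hS)
  rcases PF_dom p1 p2 (fun s => by
    by_cases h0 : PowerSeries.constantCoeff A + s () * s () = 0
    · rw [h0, mul_zero]
    · rw [hv, zero_mul]
      · simpa using h0
      · convert hd using 1
        rw [hB]; ring) with h | h
  · have := h (fun _ => 0)
    simp only [map_zero, zero_mul, add_zero, mul_zero, zero_add] at this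
    rw [hB, mul_comm A x]
    exact this
  · exfalso
    have h0 := h (fun _ => 0)
    have h1 := h (fun _ => 1)
    simp only [mul_zero, add_zero] at h0
    rw [h0] at h1
    simp at h1

lemma chart_all {u r : ℕ} (k e c : ℕ) {f : (Vars u r → F) → F} (hf : PF f)
    (hv : ∀ A G H B : PowerSeries F, A ∣ G → A ∣ H →
      PowerSeries.X ^ c ∣ A * B - G * H → f (psiV u r k e A G H B) = 0)
    (A G H B : PowerSeries F) 
    (hd : PowerSeries.X ^ c ∣ A * B - G * H) : f (psiV u r k e A G H B) = 0 := by
  classical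
  by_cases hz : ∀ n, PowerSeries.coeff n A = 0 ∧ PowerSeries.coeff n G = 0 ∧
      PowerSeries.coeff n H = 0 ∧ PowerSeries.coeff n B = 0
  · have hG : G = 0 := PowerSeries.ext fun n => (hz n).2.1
    have hH : H = 0 := PowerSeries.ext fun n => (hz n).2.2.1
    exact hv _ _ _ _ (hG ▸ dvd_zero _) (hH ▸ dvd_zero _) hd
  push Not at hz
  have hd1 := Nat.find_spec hz
  have hd2 := fun m => @Nat.find_min _ _ hz m
  generalize Nat.find hz = d at hd1 hd2
  have hd3 : ∀ m < d, PowerSeries.coeff m A = 0 ∧ PowerSeries.coeff m G = 0 ∧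
      PowerSeries.coeff m H = 0 ∧ PowerSeries.coeff m B = 0 := by
    intro m hm
    have := hd2 m hm
    push Not at this
    exact this
  have hS : PF (fun s : Unit → F => s ()) := PF_var ()
  have cS := CP_C hS
  have cA : CP (fun s : Unit → F => A + PowerSeries.C (s ()) * H +
      (PowerSeries.C (s ()) * PowerSeries.C (s ())) * G +
      (PowerSeries.C (s ()) * PowerSeries.C (s ()) * PowerSeries.C (s ())) * B) :=
    CP_add (CP_add (CP_add (CP_const _) (CP_mul cS (CP_const _)))
      (CP_mul (CP_mul cS cS) (CP_const _))) (CP_mul (CP_mul (CP_mul cS cS) cS) (CP_const _))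
  have cG : CP (fun s : Unit → F => G + PowerSeries.C (s ()) * B) :=
    CP_add (CP_const _) (CP_mul cS (CP_const _))
  have cH : CP (fun s : Unit → F => H + (PowerSeries.C (s ()) * PowerSeries.C (s ())) * B) :=
    CP_add (CP_const _) (CP_mul (CP_mul cS cS) (CP_const _))
  have p1 := PF_psi k e hf cA cG cH (CP_const B)
  have p2 := cA d
  rcases PF_dom p1 p2 (fun s => by
    by_cases h0 : PowerSeries.coeff d (A + PowerSeries.C (s ()) * H +
      (PowerSeries.C (s ()) * PowerSeries.C (s ())) * G +
      (PowerSeries.C (s ()) * PowerSeries.C (s ()) * PowerSeries.C (s ())) * B) = 0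
    · rw [h0, mul_zero]
    · have hXA : PowerSeries.X ^ d ∣ (A + PowerSeries.C (s ()) * H +
          (PowerSeries.C (s ()) * PowerSeries.C (s ())) * G +
          (PowerSeries.C (s ()) * PowerSeries.C (s ()) * PowerSeries.C (s ())) * B) := by
        rw [PowerSeries.X_pow_dvd_iff]
        intro m hm
        obtain ⟨a1, a2, a3, a4⟩ := hd3 m hm
        simp only [← map_mul, map_add, PowerSeries.coeff_C_mul, a1, a2, a3, a4, mul_zero, add_zero]
      have key : ∀ Z, PowerSeries.X ^ d ∣ Z → (A + PowerSeries.C (s ()) * H +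
          (PowerSeries.C (s ()) * PowerSeries.C (s ())) * G +
          (PowerSeries.C (s ()) * PowerSeries.C (s ()) * PowerSeries.C (s ())) * B) ∣ Z := by
        intro Z hZ
        obtain ⟨w, hw⟩ := hXA
        rw [hw] at h0 ⊢
        have hu : IsUnit w := by
          rw [PowerSeries.isUnit_iff_constantCoeff, isUnit_iff_ne_zero]
          have := PowerSeries.coeff_X_pow_mul w d 0
          rw [zero_add] at this
          rw [this] at h0
          simpa using h0
        exact (hu.mul_right_dvd).mpr hZ
      rw [hv, zero_mul]
      · apply key
        rw [PowerSeries.X_pow_dvd_iff]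
        intro m hm
        obtain ⟨a1, a2, a3, a4⟩ := hd3 m hm
        simp [a2, a4, PowerSeries.coeff_C_mul]
      · apply key
        rw [PowerSeries.X_pow_dvd_iff]
        intro m hm
        obtain ⟨a1, a2, a3, a4⟩ := hd3 m hm
        simp only [← map_mul, map_add, PowerSeries.coeff_C_mul, a3, a4, mul_zero, add_zero]
      · convert hd using 1
        ring) with h | h
  · have := h (fun _ => 0)
    simp only [map_zero, zero_mul, add_zero, mul_zero, zero_add] at this
    exact this
  · exfalso
    have hp : Polynomial.C (PowerSeries.coeff d A) + Polynomial.C (PowerSeries.coeff d H) * X +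
        Polynomial.C (PowerSeries.coeff d G) * X ^ 2 + Polynomial.C (PowerSeries.coeff d B) * X ^ 3
        = 0 := by
      apply Polynomial.funext
      intro s
      have := h (fun _ => s)
      simp only [← map_mul, map_add, PowerSeries.coeff_C_mul] at this
      simp only [eval_add, eval_mul, eval_C, eval_X, eval_pow, eval_zero]
      rw [← this]; ring
    have e0 := congrArg (fun p => Polynomial.coeff p 0) hp
    have e1 := congrArg (fun p => Polynomial.coeff p 1) hp
    have e2 := congrArg (fun p => Polynomial.coeff p 2) hp
    have e3 := congrArg (fun p => Polynomial.coeff p 3) hp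
    simp [coeff_X, coeff_C, coeff_X_pow] at e0 e1 e2 e3
    exact hd1 e0 e2 e1 e3

/-- primality: -/
lemma Y_prime {u r : ℕ} (k e c : ℕ) {f q : (Vars u r → F) → F} (hf : PF f) (hq : PF q)
    (h : ∀ A G H B : PowerSeries F, PowerSeries.X ^ c ∣ A * B - G * H →
      f (psiV u r k e A G H B) * q (psiV u r k e A G H B) = 0) :
    (∀ A G H B : PowerSeries F, PowerSeries.X ^ c ∣ A * B - G * H →
      f (psiV u r k e A G H B) = 0) ∨
    (∀ A G H B : PowerSeries F, PowerSeries.X ^ c ∣ A * B - G * H →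
      q (psiV u r k e A G H B) = 0) := by
  have red : ∀ f : (Vars u r → F) → F, PF f → (∀ S0 S1 S2 S3 : PowerSeries F,
      f (psiV u r k e S0 (S0 * S2) (S1 * S0)
      (S1 * S0 * S2 + PowerSeries.X ^ c * S3)) = 0) → 
      ∀ A G H B : PowerSeries F, PowerSeries.X ^ c ∣ A * B - G * H →
      f (psiV u r k e A G H B) = 0 := by
    intro f hf hv A G H B hd
    exact chart_all k e c hf (fun A G H B h1 h2 h3 => chart_dvd k e c hf
      (fun A G H B h1 h2 => chart_unit k e c hv A G H B h1 h2) A G H B h1 h2 h3) A G H B hd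
  have cS : ∀ i : Fin 4, CP (fun y : Fin 4 × ℕ → F => PowerSeries.mk fun n => y (i, n)) := by
    intro i n
    simp only [PowerSeries.coeff_mk]
    exact PF_var _
  have pp : ∀ f : (Vars u r → F) → F, PF f → PF _ := fun f hf =>
    PF_psi k e hf (cS 0) (CP_mul (cS 0) (cS 2)) (CP_mul (cS 1) (cS 0))
      (CP_add (CP_mul (CP_mul (cS 1) (cS 0)) (cS 2))
        (CP_mul (CP_const (PowerSeries.X ^ c)) (cS 3)))
  have lift : ∀ S0 S1 S2 S3 : PowerSeries F, ∃ y : Fin 4 × ℕ → F,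
      (PowerSeries.mk fun n => y (0, n)) = S0 ∧ (PowerSeries.mk fun n => y (1, n)) = S1 ∧
      (PowerSeries.mk fun n => y (2, n)) = S2 ∧ (PowerSeries.mk fun n => y (3, n)) = S3 := by
    intro S0 S1 S2 S3
    refine ⟨fun p => PowerSeries.coeff p.2 (![S0, S1, S2, S3] p.1), ?_, ?_, ?_, ?_⟩ <;>
    · ext n; simp
  rcases PF_dom (pp f hf) (pp q hq) (fun y => h _ _ _ _
      ⟨(PowerSeries.mk fun n => y (0, n)) * (PowerSeries.mk fun n => y (3, n)), by ring⟩) with h1 | h1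
  · left
    apply red f hf
    intro S0 S1 S2 S3
    obtain ⟨y, e0, e1, e2, e3⟩ := lift S0 S1 S2 S3
    have := h1 y
    rwa [e0, e1, e2, e3] at this
  · right
    apply red q hq
    intro S0 S1 S2 S3
    obtain ⟨y, e0, e1, e2, e3⟩ := lift S0 S1 S2 S3
    have := h1 y
    rwa [e0, e1, e2, e3] at this

end PrimeSec

open Polynomial

section XCSec
variable {F : Type*} [Field F]

lemma pa_coeff (u r : ℕ) (x : Vars u r → F) (n : ℕ) : (paOf F u r x).coeff n =
    if h : 1 ≤ n ∧ n - 1 < u - 1 then x (Sum.inl ⟨n - 1, h.2⟩) else 0 := by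
  unfold paOf
  rw [finset_sum_coeff]
  simp only [coeff_C_mul, coeff_X_pow]
  split_ifs with h
  · rw [Finset.sum_eq_single (⟨n - 1, h.2⟩ : Fin (u - 1))]
    · simp; omega
    · intro i _ hi
      rw [if_neg, mul_zero]
      intro hn; apply hi; ext; simp; omega
    · simp
  · apply Finset.sum_eq_zero
    intro i _
    rw [if_neg, mul_zero]
    have := i.2
    omega

lemma pb_coeff (u r : ℕ) (x : Vars u r → F) (n : ℕ) : (pbOf F u r x).coeff n =
    if h : 1 ≤ n ∧ n - 1 < u - r - 1 then x (Sum.inr (Sum.inl ⟨n - 1, h.2⟩)) else 0 := by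
  unfold pbOf
  rw [finset_sum_coeff]
  simp only [coeff_C_mul, coeff_X_pow]
  split_ifs with h
  · rw [Finset.sum_eq_single (⟨n - 1, h.2⟩ : Fin (u - r - 1))]
    · simp; omega
    · intro i _ hi
      rw [if_neg, mul_zero]
      intro hn; apply hi; ext; simp; omega
    · simp
  · apply Finset.sum_eq_zero
    intro i _
    rw [if_neg, mul_zero]
    have := i.2
    omega

lemma pg_coeff (u r : ℕ) (x : Vars u r → F) (n : ℕ) : (pgOf F u r x).coeff n =
    if h : n < u - r then x (Sum.inr (Sum.inr (Sum.inl ⟨n, h⟩))) else 0 := by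
  unfold pgOf
  rw [finset_sum_coeff]
  simp only [coeff_C_mul, coeff_X_pow]
  split_ifs with h
  · rw [Finset.sum_eq_single (⟨n, h⟩ : Fin (u - r))]
    · simp
    · intro i _ hi
      rw [if_neg, mul_zero]
      intro hn; apply hi; ext; simp; omega
    · simp
  · apply Finset.sum_eq_zero
    intro i _
    rw [if_neg, mul_zero]
    have := i.2
    omega

lemma ph_coeff (u r : ℕ) (x : Vars u r → F) (n : ℕ) : (phOf F u r x).coeff n =
    if h : n < u - r then x (Sum.inr (Sum.inr (Sum.inr ⟨n, h⟩))) else 0 := by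
  unfold phOf
  rw [finset_sum_coeff]
  simp only [coeff_C_mul, coeff_X_pow]
  split_ifs with h
  · rw [Finset.sum_eq_single (⟨n, h⟩ : Fin (u - r))]
    · simp
    · intro i _ hi
      rw [if_neg, mul_zero]
      intro hn; apply hi; ext; simp; omega
    · simp
  · apply Finset.sum_eq_zero
    intro i _
    rw [if_neg, mul_zero]
    have := i.2
    omega

lemma ev_A (u r : ℕ) (x : Vars u r → F) (n : ℕ) (hn : 1 ≤ n) :
    MvPolynomial.eval x (Av F u r n) = (paOf F u r x).coeff n := by
  rw [pa_coeff]; unfold Av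
  by_cases h : n - 1 < u - 1 <;> simp [h, hn]

lemma ev_B (u r : ℕ) (x : Vars u r → F) (n : ℕ) (hn : 1 ≤ n) :
    MvPolynomial.eval x (Bv F u r n) = (pbOf F u r x).coeff n := by
  rw [pb_coeff]; unfold Bv
  by_cases h : n - 1 < u - r - 1 <;> simp [h, hn]

lemma ev_G (u r : ℕ) (x : Vars u r → F) (n : ℕ) :
    MvPolynomial.eval x (Gv F u r n) = (pgOf F u r x).coeff n := by
  rw [pg_coeff]; unfold Gv
  by_cases h : n < u - r <;> simp [h]

lemma ev_H (u r : ℕ) (x : Vars u r → F) (n : ℕ) :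
    MvPolynomial.eval x (Hv F u r n) = (phOf F u r x).coeff n := by
  rw [ph_coeff]; unfold Hv
  by_cases h : n < u - r <;> simp [h]

def XP (F : Type*) [Field F] (u r k l e : ℕ) (x : Vars u r → F) : Prop :=
  X ^ k ∣ paOf F u r x ∧ X ^ e ∣ pbOf F u r x ∧
    X ^ (k + l) ∣ DD r (paOf F u r x) (pgOf F u r x) (phOf F u r x) (pbOf F u r x)

lemma evA_dvd (u r k : ℕ) (x : Vars u r → F) :
    (∀ i, 1 ≤ i → i ≤ k - 1 → MvPolynomial.eval x (Av F u r i) = 0) ↔ X ^ k ∣ paOf F u r x := by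
  rw [X_pow_dvd_iff]
  constructor
  · intro h d hd
    rcases Nat.eq_zero_or_pos d with rfl | h0
    · rw [pa_coeff]; simp
    · rw [← ev_A _ _ _ _ h0]; exact h d h0 (by omega)
  · intro h i h1 h2
    rw [ev_A _ _ _ _ h1]; exact h _ (by omega)

lemma evB_dvd (u r k : ℕ) (x : Vars u r → F) :
    (∀ i, 1 ≤ i → i ≤ k - 1 → MvPolynomial.eval x (Bv F u r i) = 0) ↔ X ^ k ∣ pbOf F u r x := by
  rw [X_pow_dvd_iff]
  constructor
  · intro h d hd
    rcases Nat.eq_zero_or_pos d with rfl | h0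
    · rw [pb_coeff]; simp
    · rw [← ev_B _ _ _ _ h0]; exact h d h0 (by omega)
  · intro h i h1 h2
    rw [ev_B _ _ _ _ h1]; exact h _ (by omega)

lemma Xchar (u r k l e : ℕ) (he : e = min l (r - k)) (hk1 : 1 ≤ k) (hk2 : k < r)
    (x : Vars u r → F) : x ∈ Xlocus F u r k l ↔ XP F u r k l e x := by
  unfold Xlocus zLocus Eset XP
  simp only [Set.mem_setOf_eq]
  split_ifs with hc
  · obtain rfl : e = l := by omega
    rw [← evA_dvd, ← evB_dvd]
    constructor
    · intro h
      have h1 : ∀ i, 1 ≤ i → i ≤ k - 1 → MvPolynomial.eval x (Av F u r i) = 0 :=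
        fun i h1 h2 => h _ (Or.inl ⟨i, h1, h2, rfl⟩)
      have h2 : ∀ i, 1 ≤ i → i ≤ e - 1 → MvPolynomial.eval x (Bv F u r i) = 0 :=
        fun i h1 h2 => h _ (Or.inr ⟨i, h1, h2, rfl⟩)
      refine ⟨h1, h2, ?_⟩
      rw [evA_dvd] at h1
      rw [evB_dvd] at h2
      unfold DD
      apply dvd_sub
      · rw [pow_add]; exact mul_dvd_mul h1 h2
      · rw [mul_assoc]; exact dvd_mul_of_dvd_left (pow_dvd_pow _ hc) _
    · rintro ⟨h1, h2, -⟩ p (⟨i, a, b, rfl⟩ | ⟨i, a, b, rfl⟩)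
      · exact h1 i a b
      · exact h2 i a b
  · obtain rfl : e = r - k := by omega
    have hm : X ^ k ∣ paOf F u r x → X ^ (r - k) ∣ pbOf F u r x → ∀ m,
        MvPolynomial.eval x ((∑ j ∈ Finset.range (m + 1),
          Av F u r (k + j) * Bv F u r (r - k + m - j)) -
          (∑ j ∈ Finset.range (m + 1), Gv F u r j * Hv F u r (m - j))) =
        (DD r (paOf F u r x) (pgOf F u r x) (phOf F u r x) (pbOf F u r x)).coeff (m + r) := by
      intro ⟨a', ha⟩ ⟨b', hb⟩ m
      have e1 : DD r (paOf F u r x) (pgOf F u r x) (phOf F u r x) (pbOf F u r x) =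
          (a' * b' - pgOf F u r x * phOf F u r x) * X ^ r := by
        unfold DD
        rw [ha, hb]
        have : (X : F[X]) ^ r = X ^ k * X ^ (r - k) := by rw [← pow_add]; congr 1; omega
        rw [this]; ring
      rw [e1, coeff_mul_X_pow, coeff_sub, coeff_mul, coeff_mul,
        Finset.Nat.sum_antidiagonal_eq_sum_range_succ (fun i j => a'.coeff i * b'.coeff j),
        Finset.Nat.sum_antidiagonal_eq_sum_range_succ
          (fun i j => (pgOf F u r x).coeff i * (phOf F u r x).coeff j)]
      rw [map_sub, map_sum, map_sum]
      congr 1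
      · apply Finset.sum_congr rfl
        intro j hj
        rw [Finset.mem_range] at hj
        rw [map_mul, ev_A _ _ _ _ (by omega), ev_B _ _ _ _ (by omega), ha, hb,
          show k + j = j + k by omega, show r - k + m - j = m - j + (r - k) by omega]
        rw [coeff_X_pow_mul, coeff_X_pow_mul]
      · apply Finset.sum_congr rfl
        intro j hj
        rw [map_mul, ev_G, ev_H]
    constructor
    · intro h
      have h1 : ∀ i, 1 ≤ i → i ≤ k - 1 → MvPolynomial.eval x (Av F u r i) = 0 :=
        fun i h1 h2 => h _ (Or.inl (Or.inl ⟨i, h1, h2, rfl⟩))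
      have h2 : ∀ i, 1 ≤ i → i ≤ r - k - 1 → MvPolynomial.eval x (Bv F u r i) = 0 :=
        fun i h1 h2 => h _ (Or.inl (Or.inr ⟨i, h1, h2, rfl⟩))
      rw [evA_dvd] at h1
      rw [evB_dvd] at h2
      refine ⟨h1, h2, ?_⟩
      rw [X_pow_dvd_iff]
      intro d hd
      rcases Nat.lt_or_ge d r with hdr | hdr
      · refine X_pow_dvd_iff.mp ?_ d hdr
        unfold DD
        apply dvd_sub
        · have : (X : F[X]) ^ r = X ^ k * X ^ (r - k) := by rw [← pow_add]; congr 1; omega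
          rw [this]; exact mul_dvd_mul h1 h2
        · rw [mul_assoc]; exact dvd_mul_right _ _
      · have := h _ (Or.inr ⟨d - r, by omega, rfl⟩)
        rw [hm h1 h2, Nat.sub_add_cancel hdr] at this
        exact this
    · rintro ⟨h1, h2, h3⟩ p ((⟨i, a, b, rfl⟩ | ⟨i, a, b, rfl⟩) | ⟨m, hm', rfl⟩)
      · rw [← evA_dvd] at h1; exact h1 i a b
      · rw [← evB_dvd] at h2; exact h2 i a b
      · rw [hm h1 h2]
        exact X_pow_dvd_iff.mp h3 _ (by omega)

lemma dvd_coe (n : ℕ) (p : F[X]) : (PowerSeries.X : PowerSeries F) ^ n ∣ (p : PowerSeries F) ↔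
    X ^ n ∣ p := by
  rw [PowerSeries.X_pow_dvd_iff, X_pow_dvd_iff]
  simp only [Polynomial.coeff_coe]

lemma psi_mem (u r k l e : ℕ) (he : e = min l (r - k)) (hk1 : 1 ≤ k) (hk2 : k < r)
    (hl1 : 1 ≤ l) (hl2 : l ≤ u - r) (hru : r < u) (A G H B : PowerSeries F)
    (hd : PowerSeries.X ^ (k + l - r) ∣ A * B - G * H) : XP F u r k l e (psiV u r k e A G H B) := by
  have ca : PowerSeries.X ^ u ∣ (paOf F u r (psiV u r k e A G H B) : PowerSeries F) -
      PowerSeries.X ^ k * A := by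
    rw [PowerSeries.X_pow_dvd_iff]
    intro m hm
    rw [map_sub, Polynomial.coeff_coe, pa_coeff]
    split_ifs with h
    · simp only [psiV, Sum.elim_inl]
      rw [Nat.sub_add_cancel h.1, sub_self]
    · obtain rfl : m = 0 := by omega
      rw [PowerSeries.coeff_X_pow_mul', if_neg (by omega), sub_self]
  have cb : PowerSeries.X ^ (u - r) ∣ (pbOf F u r (psiV u r k e A G H B) : PowerSeries F) -
      PowerSeries.X ^ e * B := by
    rw [PowerSeries.X_pow_dvd_iff]
    intro m hm
    rw [map_sub, Polynomial.coeff_coe, pb_coeff]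
    split_ifs with h
    · simp only [psiV, Sum.elim_inl, Sum.elim_inr]
      rw [Nat.sub_add_cancel h.1, sub_self]
    · obtain rfl : m = 0 := by omega
      rw [PowerSeries.coeff_X_pow_mul', if_neg (by omega), sub_self]
  have cg : PowerSeries.X ^ (u - r) ∣ (pgOf F u r (psiV u r k e A G H B) : PowerSeries F) - G := by
    rw [PowerSeries.X_pow_dvd_iff]
    intro m hm
    rw [map_sub, Polynomial.coeff_coe, pg_coeff, dif_pos hm]
    simp [psiV]
  have ch : PowerSeries.X ^ (u - r) ∣ (phOf F u r (psiV u r k e A G H B) : PowerSeries F) - H := by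
    rw [PowerSeries.X_pow_dvd_iff]
    intro m hm
    rw [map_sub, Polynomial.coeff_coe, ph_coeff, dif_pos hm]
    simp [psiV]
  unfold XP
  rw [← dvd_coe, ← dvd_coe, ← dvd_coe]
  unfold DD
  rw [Polynomial.coe_sub, Polynomial.coe_mul, Polynomial.coe_mul, Polynomial.coe_mul,
    Polynomial.coe_pow, Polynomial.coe_X]
  generalize (paOf F u r (psiV u r k e A G H B) : PowerSeries F) = a at *
  generalize (pbOf F u r (psiV u r k e A G H B) : PowerSeries F) = b at *
  generalize (pgOf F u r (psiV u r k e A G H B) : PowerSeries F) = g at *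
  generalize (phOf F u r (psiV u r k e A G H B) : PowerSeries F) = h at *
  have hak : PowerSeries.X ^ k ∣ a := by
    have h1 := (pow_dvd_pow (PowerSeries.X : PowerSeries F) (show k ≤ u by omega)).trans ca
    have := dvd_add h1 (dvd_mul_right (PowerSeries.X ^ k) A)
    rwa [sub_add_cancel] at this
  have hbe : PowerSeries.X ^ e ∣ b := by
    have h1 := (pow_dvd_pow (PowerSeries.X : PowerSeries F) (show e ≤ u - r by omega)).trans cb
    have := dvd_add h1 (dvd_mul_right (PowerSeries.X ^ e) B)
    rwa [sub_add_cancel] at this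
  refine ⟨hak, hbe, ?_⟩
  have d1 : PowerSeries.X ^ (k + l) ∣ PowerSeries.X ^ k * A * (PowerSeries.X ^ e * B) -
      PowerSeries.X ^ r * G * H := by
    rcases Nat.lt_or_ge r (k + l) with hc | hc
    · have e1 : PowerSeries.X ^ k * A * (PowerSeries.X ^ e * B) - PowerSeries.X ^ r * G * H =
          PowerSeries.X ^ r * (A * B - G * H) := by
        have : (PowerSeries.X : PowerSeries F) ^ r = PowerSeries.X ^ k * PowerSeries.X ^ e := by
          rw [← pow_add]; congr 1; omega
        rw [this]; ring
      rw [e1, show k + l = r + (k + l - r) by omega, pow_add]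
      refine mul_dvd_mul dvd_rfl ?_
      exact hd
    · apply dvd_sub
      · rw [show k + l = k + e by omega, pow_add]
        exact mul_dvd_mul (dvd_mul_right _ _) (dvd_mul_right _ _)
      · rw [mul_assoc]; exact dvd_mul_of_dvd_left (pow_dvd_pow _ hc) _
  have e2 : a * b - PowerSeries.X ^ r * g * h =
      (PowerSeries.X ^ k * A * (PowerSeries.X ^ e * B) - PowerSeries.X ^ r * G * H) +
      (a - PowerSeries.X ^ k * A) * (PowerSeries.X ^ e * B) + a * (b - PowerSeries.X ^ e * B)
      - PowerSeries.X ^ r * (g - G) * H - PowerSeries.X ^ r * (h - H) * g := by ring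
  rw [e2]
  have pw : ∀ n, k + l ≤ n → (PowerSeries.X : PowerSeries F) ^ (k + l) ∣ PowerSeries.X ^ n :=
    fun n hn => pow_dvd_pow _ hn
  refine dvd_sub (dvd_sub (dvd_add (dvd_add d1 ?_) ?_) ?_) ?_
  · exact dvd_mul_of_dvd_left ((pw _ (by omega)).trans ca) _
  · refine (pw (k + (u - r)) (by omega)).trans ?_
    rw [pow_add]; exact mul_dvd_mul hak cb
  · refine dvd_mul_of_dvd_left ((pw (r + (u - r)) (by omega)).trans ?_) _
    rw [pow_add]; exact mul_dvd_mul dvd_rfl cg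
  · refine dvd_mul_of_dvd_left ((pw (r + (u - r)) (by omega)).trans ?_) _
    rw [pow_add]; exact mul_dvd_mul dvd_rfl ch

lemma psi_surj (u r k l e : ℕ) (he : e = min l (r - k)) (hk2 : k < r)
    (x : Vars u r → F) (hx : XP F u r k l e x) : ∃ A G H B : PowerSeries F,
      PowerSeries.X ^ (k + l - r) ∣ A * B - G * H ∧ psiV u r k e A G H B = x := by
  obtain ⟨⟨A, hA⟩, ⟨B, hB⟩, h3⟩ := hx
  refine ⟨A, pgOf F u r x, phOf F u r x, B, ?_, ?_⟩
  · rw [← Polynomial.coe_mul, ← Polynomial.coe_mul, ← Polynomial.coe_sub, dvd_coe]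
    rcases Nat.lt_or_ge r (k + l) with hc | hc
    · have e1 : DD r (paOf F u r x) (pgOf F u r x) (phOf F u r x) (pbOf F u r x) =
          X ^ r * (A * B - pgOf F u r x * phOf F u r x) := by
        unfold DD
        rw [hA, hB]
        have : (X : F[X]) ^ r = X ^ k * X ^ e := by rw [← pow_add]; congr 1; omega
        rw [this]; ring
      rw [e1, Xpow_cancel] at h3
      exact h3
    · rw [show k + l - r = 0 by omega, pow_zero]; exact one_dvd _
  · have cA : (PowerSeries.X : PowerSeries F) ^ k * (A : PowerSeries F) =
        (paOf F u r x : PowerSeries F) := by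
      rw [hA, Polynomial.coe_mul, Polynomial.coe_pow, Polynomial.coe_X]
    have cB : (PowerSeries.X : PowerSeries F) ^ e * (B : PowerSeries F) =
        (pbOf F u r x : PowerSeries F) := by
      rw [hB, Polynomial.coe_mul, Polynomial.coe_pow, Polynomial.coe_X]
    unfold psiV
    rw [cA, cB]
    ext i
    rcases i with i | i | i | i
    · simp [pa_coeff]
    · simp [pb_coeff]
    · simp [pg_coeff]
    · simp [ph_coeff]

end XCSec

open Polynomial

section GenSec

lemma Kform (u r k l : ℕ) (hru : r < u) (hr : 2 ≤ r) (hk1 : 1 ≤ k) (hk2 : k ≤ r - 1)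
    (hl2 : l ≤ u - r)
    (P : Multiset ℕ) (hPpos : 0 ∉ P)
    (hcode : burgeCode P =
      List.replicate (u - r - l) false ++ List.replicate l true ++
        List.replicate (r - k) false ++ List.replicate k true ++ [false])
    (v e : ℕ) (hv : u = r + v) (he : e = min l (r - k)) (κ : ℕ → ℕ)
    (hκ : ∀ s, κ s = (P.map fun p => min p s).sum) :
    κ 0 = 0 ∧ κ 1 = k + l ∧ ∀ t, κ (t + 2) = min ((t + 2) * (k + l))
      (min (v + min ((t + 2) * k) (r + t * e)) (r + 2 * v)) := by
  have hB := burge_kf u r k l hru hr hk1 hk2 hl2 P hPpos hcode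
  have he' : min (l : ℤ) ((r : ℤ) - k) = (e : ℤ) := by
    clear * - he hk2 hr; omega
  simp only [he', ← hκ] at hB
  clear hκ hcode
  have c1 : e ≤ l := by clear * - he; omega
  have c2 : e + k ≤ r := by clear * - he hk2 hr; omega
  clear he he'
  refine ⟨?_, ?_, ?_⟩
  · have := hB 0
    clear hB
    push_cast at this
    rw [min_eq_left] at this
    · omega
    · clear this
      refine le_min (le_min ?_ ?_) ?_ <;> omega
  · have := hB 1
    clear hB
    push_cast at this
    rw [min_eq_left] at this
    · omega
    · clear this
      refine le_min (le_min ?_ ?_) ?_ <;> omega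
  · intro t
    have := hB (t + 2)
    zify
    rw [this]
    subst hv
    congr 1
    congr 1
    · rw [← min_add_add_left]
      push_cast
      congr 1 <;> ring
    · push_cast; ring

variable {F : Type*} [Field F]

lemma le_of_coeff (m d : ℕ) (p : F[X]) (h1 : X ^ m ∣ p) (h2 : p.coeff d ≠ 0) : m ≤ d := by
  by_contra hc
  exact h2 (X_pow_dvd_iff.mp h1 d (by omega))

lemma EX_of_coeff (d : ℕ) (p : F[X]) (h1 : X ^ d ∣ p) (h2 : p.coeff d ≠ 0) : EX d p := by
  apply EX_of _ _ h1
  intro h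
  have := le_of_coeff _ _ _ h h2
  omega

lemma EX_coeff (d : ℕ) (p : F[X]) (h : EX d p) : p.coeff d ≠ 0 := by
  intro h0
  apply EX_not _ _ h
  rw [X_pow_dvd_iff]
  intro m hm
  rcases Nat.lt_succ_iff_lt_or_eq.mp hm with h1 | rfl
  · exact X_pow_dvd_iff.mp (EX_dvd _ _ h) m h1
  · exact h0

lemma EX_pow (d : ℕ) (p : F[X]) (h : EX d p) (s : ℕ) : EX (s * d) (p ^ s) := by
  induction s with
  | zero => exact ⟨1, by simp, fun h => by simpa using X_dvd_iff.mp h⟩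
  | succ s ih =>
    rw [pow_succ, Nat.succ_mul]
    exact EX_mul _ _ _ _ ih h

lemma EX_X (d : ℕ) : EX d ((X : F[X]) ^ d) := EX_of_coeff _ _ dvd_rfl (by simp)

lemma gen_kappa (v r k l e : ℕ) (hel' : e ≤ l) (hek : e + k ≤ r) (hk1 : 1 ≤ k)
    (hl2 : l ≤ v) (a g h b : F[X]) (κ : ℕ → ℕ)
    (hκ0 : κ 0 = 0) (hκ1 : κ 1 = k + l)
    (hκ : ∀ t, κ (t + 2) = min ((t + 2) * (k + l))
      (min (v + min ((t + 2) * k) (r + t * e)) (r + 2 * v)))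
    (ha : X ^ k ∣ a) (hb : X ^ e ∣ b) (hD : X ^ (k + l) ∣ DD r a g h b)
    (qa : a.coeff k ≠ 0) (qD : l < v → (DD r a g h b).coeff (k + l) ≠ 0)
    (qA : ∀ t, min ((t + 2) * k) (r + t * e) < r + v →
      (AS r a g h b (t + 2)).coeff (min ((t + 2) * k) (r + t * e)) ≠ 0) (s n : ℕ) :
      n ≤ κ s ↔
      X ^ n ∣ DD r a g h b ^ s ∧ Zge r a g h b s (n - v) ∧ n ≤ r + 2 * v := by
  have hDs : ∀ s m, m ≤ s * (k + l) → X ^ m ∣ DD r a g h b ^ s := by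
    intro s m hm
    rw [mul_comm] at hm
    refine (pow_dvd_pow _ hm).trans ?_
    rw [pow_mul]
    exact pow_dvd_pow_of_dvd hD s
  constructor
  · intro hn
    rcases s with _ | _ | t
    · rw [hκ0] at hn
      obtain rfl : n = 0 := Nat.le_zero.mp hn
      simp [Zge]
    · rw [zero_add] at *
      rw [hκ1] at hn
      refine ⟨hDs 1 n (by clear * - hn; omega), ?_, by clear * - hn hek hl2 hel'; omega⟩
      apply Zge_mono _ _ _ _ _ _ k _ (by clear * - hn hl2; omega)
      have hr : (X : F[X]) ^ k ∣ X ^ r := pow_dvd_pow _ (by clear * - hek; omega)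
      refine ⟨?_, dvd_mul_of_dvd_left hr _, dvd_mul_of_dvd_left hr _, dvd_mul_of_dvd_left hr _⟩
      simpa [AS, RS, QS, QQ] using ha
    · rw [show t + 1 + 1 = t + 2 from rfl] at *
      rw [hκ] at hn
      have n1 := hn.trans (min_le_left _ _)
      have n2 := (hn.trans (min_le_right _ _)).trans (min_le_left _ _)
      have n3 := (hn.trans (min_le_right _ _)).trans (min_le_right _ _)
      refine ⟨hDs _ n n1, ?_, n3⟩
      have n4 : n - v ≤ min ((t + 2) * k) (r + t * e) := Nat.sub_le_iff_le_add'.mpr n2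
      have n5 := n4.trans (min_le_left _ _)
      have n6 := n4.trans (min_le_right _ _)
      clear hn n1 n2 n3 n4
      generalize n - v = m at *
      rcases Nat.le_total e k with hc | hc
      · exact Zge_L r a g h b e k m ha ((pow_dvd_pow _ hc).trans ha) hb
          ((pow_dvd_pow _ (by clear * - hc hel'; omega)).trans hD) t n5 n6
      · refine Zge_L r a g h b k k m ha ha ((pow_dvd_pow _ hc).trans hb)
          ((pow_dvd_pow _ (by clear * - hc hel'; omega)).trans hD) t n5 (n5.trans ?_)
        have : (t + 2) * k = t * k + 2 * k := by ring
        clear * - this hek hc; omega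
  · rintro ⟨h1, h2, h3⟩
    have hs : s ≠ 0 → n ≤ v + s * k → n ≤ s * (k + l) := by
      intro h0 hn
      rcases Nat.lt_or_ge l v with hl | hl
      · have hE := EX_pow _ _ (EX_of_coeff _ _ hD (qD hl)) s
        exact le_of_coeff _ _ _ h1 (EX_coeff _ _ hE)
      · refine hn.trans ?_
        rw [mul_add]
        have : v ≤ s * l := hl.trans (Nat.le_mul_of_pos_left _ (Nat.pos_of_ne_zero h0))
        clear * - this; omega
    rcases s with _ | _ | t
    · rw [pow_zero] at h1
      rw [hκ0]
      exact le_of_coeff _ 0 _ h1 (by simp)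
    · rw [zero_add] at *
      rw [hκ1]
      have h4 : X ^ (n - v) ∣ a := by
        have := h2.1
        simpa [AS, RS, QS, QQ] using this
      have := le_of_coeff _ _ _ h4 qa
      have := hs one_ne_zero (by clear * - this; omega)
      clear * - this; omega
    · rw [show t + 1 + 1 = t + 2 from rfl] at *
      rw [hκ]
      have h5 : n ≤ v + min ((t + 2) * k) (r + t * e) := by
        rcases Nat.lt_or_ge (min ((t + 2) * k) (r + t * e)) (r + v) with hc | hc
        · have := le_of_coeff _ _ _ h2.1 (qA t hc)
          exact Nat.sub_le_iff_le_add'.mp this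
        · generalize min ((t + 2) * k) (r + t * e) = q at *
          clear * - hc h3; omega
      refine le_min (hs (by clear * - t; omega) (h5.trans
        (Nat.add_le_add_left (min_le_left _ _) _))) (le_min h5 h3)

end GenSec

open Polynomial

section FinSec
variable {F : Type*} [Field F] {τ : Type*}

/-- coefficientwise polynomial families of polynomials -/
def CPol (φ : (τ → F) → F[X]) : Prop := ∀ n, PF (fun y => (φ y).coeff n)

lemma CPol_const (c : F[X]) : CPol (fun _ : τ → F => c) := fun _ => PF_const _
lemma CPol_add {φ ψ : (τ → F) → F[X]} (h1 : CPol φ) (h2 : CPol ψ) :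
    CPol (fun y => φ y + ψ y) := fun n => by simpa using PF_add (h1 n) (h2 n)
lemma CPol_sub {φ ψ : (τ → F) → F[X]} (h1 : CPol φ) (h2 : CPol ψ) :
    CPol (fun y => φ y - ψ y) := fun n => by
  simpa [sub_eq_add_neg] using PF_add (h1 n) (PF_neg (h2 n))
lemma CPol_mul {φ ψ : (τ → F) → F[X]} (h1 : CPol φ) (h2 : CPol ψ) :
    CPol (fun y => φ y * ψ y) := fun n => by
  simp only [coeff_mul]
  exact PF_sum _ (fun (i : ℕ × ℕ) y => (φ y).coeff i.1 * (ψ y).coeff i.2)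
    fun i => PF_mul (h1 _) (h2 _)
lemma CPol_pow {φ : (τ → F) → F[X]} (h1 : CPol φ) (s : ℕ) : CPol (fun y => φ y ^ s) := by
  induction s with
  | zero => simpa using CPol_const 1
  | succ s ih => simpa only [pow_succ] using CPol_mul ih h1

lemma CPol_DD (r : ℕ) {a g h b : (τ → F) → F[X]} (ha : CPol a) (hg : CPol g) (hh : CPol h)
    (hb : CPol b) : CPol (fun y => DD r (a y) (g y) (h y) (b y)) := by
  unfold DD
  exact CPol_sub (CPol_mul ha hb) (CPol_mul (CPol_mul (CPol_const _) hg) hh)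

lemma CPol_QS (r : ℕ) {a g h b : (τ → F) → F[X]} (ha : CPol a) (hg : CPol g) (hh : CPol h)
    (hb : CPol b) (s : ℕ) : CPol (fun y => QS r (a y) (g y) (h y) (b y) s) := by
  induction s using Nat.strong_induction_on with
  | _ s ih =>
    rcases s with _ | _ | s
    · exact CPol_const 0
    · exact CPol_const 1
    · simp only [QS_rec]
      exact CPol_sub (CPol_mul (CPol_add ha hb) (ih _ (by omega)))
        (CPol_mul (CPol_DD r ha hg hh hb) (ih _ (by omega)))

lemma CPol_RS (r : ℕ) {a g h b : (τ → F) → F[X]} (ha : CPol a) (hg : CPol g) (hh : CPol h)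
    (hb : CPol b) (s : ℕ) : CPol (fun y => RS r (a y) (g y) (h y) (b y) s) := by
  induction s with
  | zero => exact CPol_const 0
  | succ s ih =>
    simp only [RS]
    exact CPol_add (CPol_mul ha ih) (CPol_QS r ha hg hh hb s)

lemma CPol_AS (r : ℕ) {a g h b : (τ → F) → F[X]} (ha : CPol a) (hg : CPol g) (hh : CPol h)
    (hb : CPol b) (s : ℕ) : CPol (fun y => AS r (a y) (g y) (h y) (b y) s) := by
  unfold AS
  exact CPol_add (CPol_pow ha s) (CPol_mul (CPol_mul (CPol_mul (CPol_const _) hg) hh)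
    (CPol_RS r ha hg hh hb s))

lemma CPol_pa (u r : ℕ) : CPol (fun x : Vars u r → F => paOf F u r x) := fun n => by
  simp only [pa_coeff]
  split_ifs
  · exact PF_var _
  · exact PF_const _
lemma CPol_pb (u r : ℕ) : CPol (fun x : Vars u r → F => pbOf F u r x) := fun n => by
  simp only [pb_coeff]
  split_ifs
  · exact PF_var _
  · exact PF_const _
lemma CPol_pg (u r : ℕ) : CPol (fun x : Vars u r → F => pgOf F u r x) := fun n => by
  simp only [pg_coeff]
  split_ifs
  · exact PF_var _
  · exact PF_const _
lemma CPol_ph (u r : ℕ) : CPol (fun x : Vars u r → F => phOf F u r x) := fun n => by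
  simp only [ph_coeff]
  split_ifs
  · exact PF_var _
  · exact PF_const _

lemma pa_psi (u r k e : ℕ) (hk1 : 1 ≤ k) (hk : k < u) (G H B : PowerSeries F) :
    paOf F u r (psiV u r k e 1 G H B) = X ^ k := by
  ext n
  rw [pa_coeff, coeff_X_pow]
  split_ifs with h1 h2 h2
  · simp only [psiV, Sum.elim_inl]
    rw [Nat.sub_add_cancel h1.1, mul_one, PowerSeries.coeff_X_pow, if_pos h2]
  · simp only [psiV, Sum.elim_inl]
    rw [Nat.sub_add_cancel h1.1, mul_one, PowerSeries.coeff_X_pow, if_neg h2]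
  · omega
  · rfl

lemma pb_psi (u r k e j : ℕ) (he1 : 1 ≤ e) (A G H : PowerSeries F) :
    pbOf F u r (psiV u r k e A G H (PowerSeries.X ^ j)) =
      if e + j < u - r then X ^ (e + j) else 0 := by
  ext n
  rw [pb_coeff]
  split_ifs with h1 h2 h2
  · simp only [psiV, Sum.elim_inl, Sum.elim_inr]
    rw [Nat.sub_add_cancel h1.1, ← pow_add, PowerSeries.coeff_X_pow, coeff_X_pow]
  · simp only [psiV, Sum.elim_inl, Sum.elim_inr]
    rw [Nat.sub_add_cancel h1.1, ← pow_add, PowerSeries.coeff_X_pow, if_neg (by omega), coeff_zero]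
  · rw [coeff_X_pow, if_neg (by omega)]
  · rfl

lemma pb_psi0 (u r k e : ℕ) (A G H : PowerSeries F) :
    pbOf F u r (psiV u r k e A G H 0) = 0 := by
  ext n
  rw [pb_coeff]
  split_ifs with h1 <;> simp [psiV]

lemma pg_psi0 (u r k e : ℕ) (A B H : PowerSeries F) :
    pgOf F u r (psiV u r k e A 0 H B) = 0 := by
  ext n
  rw [pg_coeff]
  split_ifs with h1 <;> simp [psiV]

lemma ph_psi0 (u r k e : ℕ) (A B G : PowerSeries F) :
    phOf F u r (psiV u r k e A G 0 B) = 0 := by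
  ext n
  rw [ph_coeff]
  split_ifs with h1 <;> simp [psiV]

lemma pg_psi1 (u r k e : ℕ) (hr : r < u) (A B H : PowerSeries F) :
    pgOf F u r (psiV u r k e A 1 H B) = 1 := by
  ext n
  rw [pg_coeff]
  split_ifs with h1
  · simp [psiV, PowerSeries.coeff_one, coeff_one]
  · rw [coeff_one, if_neg (by omega)]

lemma ph_psi1 (u r k e : ℕ) (hr : r < u) (A B G : PowerSeries F) :
    phOf F u r (psiV u r k e A G 1 B) = 1 := by
  ext n
  rw [ph_coeff]
  split_ifs with h1
  · simp [psiV, PowerSeries.coeff_one, coeff_one]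
  · rw [coeff_one, if_neg (by omega)]

lemma wit_A (u v r k l e : ℕ) (hv : u = r + v) (hel' : e ≤ l) (hek : e + k ≤ r) (hk1 : 1 ≤ k)
    (he1 : 1 ≤ e) (hl2 : l ≤ v) (c : ℕ) (t : ℕ)
    (ht : min ((t + 2) * k) (r + t * e) < r + v) :
    ∃ A G H B : PowerSeries F, PowerSeries.X ^ c ∣ A * B - G * H ∧
      (AS r (paOf F u r (psiV u r k e A G H B)) (pgOf F u r (psiV u r k e A G H B))
        (phOf F u r (psiV u r k e A G H B)) (pbOf F u r (psiV u r k e A G H B)) (t + 2)).coeff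
        (min ((t + 2) * k) (r + t * e)) ≠ 0 := by
  rcases Nat.lt_or_ge (r + t * e) ((t + 2) * k) with hc | hc
  · refine ⟨1, 1, 1, PowerSeries.X ^ 0, by simp, ?_⟩
    rw [pa_psi _ _ _ _ hk1 (by clear * - hv hek he1; omega), pb_psi _ _ _ _ _ he1,
      pg_psi1 _ _ _ _ (by clear * - hv hl2 he1 hel'; omega),
      ph_psi1 _ _ _ _ (by clear * - hv hl2 he1 hel'; omega)]
    rw [min_eq_right hc.le] at ht ⊢
    have hek2 : e < k := by
      by_contra hcon
      have h1 : t * k ≤ t * e := Nat.mul_le_mul_left _ (by clear * - hcon; omega)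
      have h2 : (t + 2) * k = t * k + 2 * k := by ring
      clear * - h1 h2 hcon hc hek; omega
    apply EX_coeff
    unfold AS
    rw [add_comm ((X ^ k) ^ (t + 2))]
    apply EX_add
    · rw [mul_one, mul_one]
      apply EX_mul _ _ _ _ (EX_X r)
      split_ifs with h1
      · apply RS_exact
        · exact pow_dvd_pow _ hek2
        · rw [add_zero]; exact EX_X e
        · unfold DD
          apply dvd_sub
          · rw [← pow_add]; exact pow_dvd_pow _ (by clear * - hek2; omega)
          · rw [mul_one, mul_one]; exact pow_dvd_pow _ (by clear * - hek2 hek; omega)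
      · have htv : t * e < v := by clear * - ht; omega
        have hve : v ≤ e := by clear * - h1 hv; omega
        obtain rfl : t = 0 := by
          by_contra h0
          have := Nat.le_mul_of_pos_left e (Nat.pos_of_ne_zero h0)
          clear * - this htv hve; omega
        simp only [RS, QS, QQ, zero_mul]
        simp only [mul_zero, zero_add]
        exact EX_X 0
    · rw [← pow_mul]
      exact pow_dvd_pow _ (by rw [mul_comm k]; exact hc)
  · refine ⟨1, 0, 0, 0, by simp, ?_⟩
    rw [pa_psi _ _ _ _ hk1 (by clear * - hv hek he1; omega), pb_psi0, pg_psi0, ph_psi0,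
      min_eq_left hc]
    unfold AS
    rw [← pow_mul, mul_comm k]
    simp

lemma wit_D (u v r k l e : ℕ) (hv : u = r + v) (he : e = min l (r - k)) (hk1 : 1 ≤ k)
    (hk2 : k < r) (he1 : 1 ≤ e) (hl2 : l < v) :
    ∃ A G H B : PowerSeries F, PowerSeries.X ^ (k + l - r) ∣ A * B - G * H ∧
      (DD r (paOf F u r (psiV u r k e A G H B)) (pgOf F u r (psiV u r k e A G H B))
        (phOf F u r (psiV u r k e A G H B)) (pbOf F u r (psiV u r k e A G H B))).coeff
        (k + l) ≠ 0 := by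
  refine ⟨1, 0, 0, PowerSeries.X ^ (l - e), ?_, ?_⟩
  · rw [one_mul, mul_zero, sub_zero]
    exact pow_dvd_pow _ (by omega)
  · rw [pa_psi _ _ _ _ hk1 (by omega), pb_psi _ _ _ _ _ he1, pg_psi0, ph_psi0,
      if_pos (by omega), show e + (l - e) = l by omega]
    unfold DD
    rw [← pow_add]
    simp

variable [Infinite F]

lemma X_prime (u r k l e : ℕ) (he : e = min l (r - k)) (hk1 : 1 ≤ k) (hk2 : k < r)
    (hl1 : 1 ≤ l) (hl2 : l ≤ u - r) (hru : r < u) {f q : (Vars u r → F) → F} (hf : PF f)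
    (hq : PF q) (h : ∀ x, XP F u r k l e x → f x * q x = 0)
    (hw : ∃ A G H B : PowerSeries F, PowerSeries.X ^ (k + l - r) ∣ A * B - G * H ∧
      q (psiV u r k e A G H B) ≠ 0) (x : Vars u r → F) (hx : XP F u r k l e x) : f x = 0 := by
  rcases Y_prime k e (k + l - r) hf hq
    (fun A G H B hd => h _ (psi_mem u r k l e he hk1 hk2 hl1 hl2 hru A G H B hd)) with h1 | h1
  · obtain ⟨A, G, H, B, hd, rfl⟩ := psi_surj u r k l e he hk2 x hx
    exact h1 _ _ _ _ hd
  · obtain ⟨A, G, H, B, hd, hne⟩ := hw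
    exact absurd (h1 _ _ _ _ hd) hne

lemma X_prime_prod (u r k l e : ℕ) (he : e = min l (r - k)) (hk1 : 1 ≤ k) (hk2 : k < r)
    (hl1 : 1 ≤ l) (hl2 : l ≤ u - r) (hru : r < u) (q : ℕ → (Vars u r → F) → F)
    (hq : ∀ i, PF (q i)) (hw : ∀ i, ∃ A G H B : PowerSeries F,
      PowerSeries.X ^ (k + l - r) ∣ A * B - G * H ∧ q i (psiV u r k e A G H B) ≠ 0) (n : ℕ) :
    ∀ (f : (Vars u r → F) → F), PF f →
    (∀ x, XP F u r k l e x → f x * ∏ i ∈ Finset.range n, q i x = 0) →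
      ∀ x, XP F u r k l e x → f x = 0 := by
  induction n with
  | zero =>
    intro f hf h x hx
    simpa using h x hx
  | succ n ih =>
    intro f hf h
    apply ih f hf
    intro x hx
    refine X_prime u r k l e he hk1 hk2 hl1 hl2 hru
      (f := fun x => f x * ∏ i ∈ Finset.range n, q i x) (q := q n)
      (PF_mul hf (PF_prod _ _ hq)) (hq n) ?_ (hw n) x hx
    intro x hx
    have := h x hx
    rw [Finset.prod_range_succ, ← mul_assoc] at this
    exact this

end FinSec

theorem statement0 (F : Type*) [Field F] [Infinite F] (u r k l : ℕ)
    (hru : r < u) (hr : 2 ≤ r) (hk1 : 1 ≤ k) (hk2 : k ≤ r - 1)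
    (hl1 : 1 ≤ l) (hl2 : l ≤ u - r)
    (P : Multiset ℕ) (hPpos : 0 ∉ P)
    (hcode : burgeCode P =
      List.replicate (u - r - l) false ++ List.replicate l true ++
        List.replicate (r - k) false ++ List.replicate k true ++ [false]) :
    zClosure F u r {x | JordanTypeIs F (Mx F u r hru.le x) P} = Xlocus F u r k l := by
  classical
  obtain ⟨κ, hκ⟩ : ∃ κ : ℕ → ℕ, ∀ s, κ s = (P.map fun p => min p s).sum := ⟨_, fun _ => rfl⟩
  obtain ⟨v, hv⟩ : ∃ v, u = r + v := Nat.exists_eq_add_of_le hru.le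
  obtain ⟨e, he⟩ : ∃ e, e = min l (r - k) := ⟨_, rfl⟩
  obtain ⟨hκ0, hκ1, hκt⟩ := Kform u r k l hru hr hk1 hk2 hl2 P hPpos hcode v e hv he κ hκ
  clear hcode hPpos
  have hel : e ≤ l := by clear * - he; omega
  have hek : e + k ≤ r := by clear * - he hk2 hr; omega
  have he1 : 1 ≤ e := by clear * - he hk2 hr hl1; omega
  have hk3 : k < r := by clear * - hk2 hr; omega
  have hv1 : u - r = v := by clear * - hv; omega
  have hv2 : 2 * u - r = r + 2 * v := by clear * - hv; omega
  have hlv : l ≤ v := hv1 ▸ hl2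
  have hW : ∀ x : Vars u r → F, JordanTypeIs F (Mx F u r hru.le x) P ↔
      ∀ s n, n ≤ κ s ↔ X ^ n ∣ DD r (paOf F u r x) (pgOf F u r x) (phOf F u r x) (pbOf F u r x) ^ s
        ∧ Zge r (paOf F u r x) (pgOf F u r x) (phOf F u r x) (pbOf F u r x) s (n - v) ∧
        n ≤ r + 2 * v := by
    intro x
    have hK : ∀ s n, n ≤ Module.finrank F (LinearMap.ker (Mx F u r hru.le x ^ s)) ↔ _ :=
      KERs u r hru.le (paOf F u r x) (pgOf F u r x) (phOf F u r x) (pbOf F u r x)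
    simp only [JordanTypeIs, ← hκ]
    constructor
    · intro h s n
      rw [← h s, hK, hv1, hv2]
    · intro h s
      apply eq_of_forall_le_iff
      intro n
      rw [h s n, hK, hv1, hv2]
  have hXc := Xchar (F := F) u r k l e he hk1 hk3
  apply Set.Subset.antisymm
  · apply Set.sInter_subset_of_mem
    refine ⟨⟨_, rfl⟩, ?_⟩
    intro x hx
    rw [hXc]
    exact WsubX_v v r k l e hel hek hk1 hk3 hl1 hlv _ _ _ _ κ hκ1 hκt ((hW x).mp hx)
  · rintro x hx C ⟨⟨T, rfl⟩, hC⟩ p hp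
    rw [hXc] at hx
    have hpf : PF (fun x : Vars u r → F => MvPolynomial.eval x p) := ⟨p, fun _ => rfl⟩
    have ca := CPol_pa (F := F) u r
    have cb := CPol_pb (F := F) u r
    have cg := CPol_pg (F := F) u r
    have ch := CPol_ph (F := F) u r
    obtain ⟨q, hqdef⟩ : ∃ q : ℕ → (Vars u r → F) → F, q = fun t x =>
        if min ((t + 2) * k) (r + t * e) < r + v then
          (AS r (paOf F u r x) (pgOf F u r x) (phOf F u r x) (pbOf F u r x) (t + 2)).coeff
            (min ((t + 2) * k) (r + t * e)) else 1 := ⟨_, rfl⟩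
    obtain ⟨qD, hqD⟩ : ∃ qD : (Vars u r → F) → F, qD = fun x => if l < v then
      (DD r (paOf F u r x) (pgOf F u r x) (phOf F u r x) (pbOf F u r x)).coeff (k + l) else 1 :=
      ⟨_, rfl⟩
    have pq : ∀ i, PF (q i) := by
      intro i
      rw [hqdef]
      by_cases hc : min ((i + 2) * k) (r + i * e) < r + v
      · simp only [hc, if_true]; exact CPol_AS r ca cg ch cb _ _
      · simp only [hc, if_false]; exact PF_const _
    have pD : PF qD := by
      rw [hqD]
      by_cases hc : l < v
      · simp only [hc, if_true]; exact CPol_DD r ca cg ch cb _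
      · simp only [hc, if_false]; exact PF_const _
    have wtriv : ∃ A G H B : PowerSeries F, PowerSeries.X ^ (k + l - r) ∣ A * B - G * H ∧
        (paOf F u r (psiV u r k e A G H B)).coeff k ≠ 0 := by
      refine ⟨1, 0, 0, 0, by simp, ?_⟩
      rw [pa_psi _ _ _ _ hk1 (hk3.trans hru)]
      simp
    have wq : ∀ i, ∃ A G H B : PowerSeries F,
        PowerSeries.X ^ (k + l - r) ∣ A * B - G * H ∧ q i (psiV u r k e A G H B) ≠ 0 := by
      intro i
      rw [hqdef]
      by_cases hc : min ((i + 2) * k) (r + i * e) < r + v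
      · simp only [hc, if_true]
        exact wit_A u v r k l e hv hel hek hk1 he1 hlv _ i hc
      · simp only [hc, if_false]
        exact ⟨0, 0, 0, 0, by simp, one_ne_zero⟩
    have wD : ∃ A G H B : PowerSeries F,
        PowerSeries.X ^ (k + l - r) ∣ A * B - G * H ∧ qD (psiV u r k e A G H B) ≠ 0 := by
      rw [hqD]
      by_cases hc : l < v
      · simp only [hc, if_true]
        exact wit_D u v r k l e hv he hk1 hk3 he1 hc
      · simp only [hc, if_false]
        exact ⟨0, 0, 0, 0, by simp, one_ne_zero⟩
    refine X_prime u r k l e he hk1 hk3 hl1 hl2 hru hpf (ca k) ?_ wtriv x hx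
    refine X_prime u r k l e he hk1 hk3 hl1 hl2 hru (PF_mul hpf (ca k)) pD ?_ wD
    refine X_prime_prod u r k l e he hk1 hk3 hl1 hl2 hru q pq wq u _
      (PF_mul (PF_mul hpf (ca k)) pD) ?_
    intro y hy
    by_contra hne
    have n1 := right_ne_zero_of_mul hne
    have n2 := left_ne_zero_of_mul hne
    have n3 := right_ne_zero_of_mul n2
    have n4 := left_ne_zero_of_mul n2
    have n5 := right_ne_zero_of_mul n4
    have n6 := left_ne_zero_of_mul n4
    apply n6
    refine hC ?_ p hp
    rw [Set.mem_ofPred_eq, hW]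
    obtain ⟨y1, y2, y3⟩ := hy
    refine gen_kappa v r k l e hel hek hk1 hlv _ _ _ _ κ hκ0 hκ1 hκt y1 y2 y3 n5 ?_ ?_
    · intro hl
      rw [hqD] at n3
      simpa only [hl, if_true] using n3
    · intro t ht
      have htu : t < u := by
        by_contra hc
        have h1 : t ≤ t * e := Nat.le_mul_of_pos_right _ he1
        have h2 : t + 2 ≤ (t + 2) * k := Nat.le_mul_of_pos_right _ hk1
        have h3 : r + v ≤ min ((t + 2) * k) (r + t * e) := by
          apply le_min
          · clear * - hc h2 hv; omega
          · clear * - hc h1 hv; omega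
        exact absurd ht (not_lt.mpr h3)
      have := Finset.prod_ne_zero_iff.mp n1 t (Finset.mem_range.mpr htu)
      rw [hqdef] at this
      simpa only [ht, if_true] using this
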